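/- For every prime power q and every integer n ≥ 25, for every a, b in F_q there exists a nonzero element ξ in F_{q^n} such that Tr(ξ) = a, Tr(ξ^{-1}) = b, and ξ + ξ^{-1} is a primitive element of F_{q^n}. -/

import Mathlib

section Bombieri

variable {K A Γ : Type*} [Field K] [CommRing A] [Algebra K A]
  [LinearOrderedCommGroupWithZero Γ]

/-- A `K`-algebra with a discrete pole order and a basis of elements of distinct pole orders. -/
structure PoleData (K A Γ : Type*) [Field K] [CommRing A] [Algebra K A]
    [LinearOrderedCommGroupWithZero Γ] (G : ℕ) where
  v : Valuation A Γ
  γ : Γ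
  hγ : 1 < γ
  M : ℕ
  hM : M ≠ 0
  hvK : ∀ c : K, c ≠ 0 → v (algebraMap K A c) = 1
  m : ℕ → A
  s : Set ℕ
  hm : ∀ n ∈ s, v (m n) ^ M = γ ^ n
  hspan : ∀ a : A, a ∈ Submodule.span K (m '' s)
  hG : ∀ n, G ≤ n → n ∈ s

namespace PoleData

variable {G : ℕ} (P : PoleData K A Γ G)

open Classical in
/-- The indices up to `B`. -/
noncomputable def I (B : ℕ) : Finset ℕ := (Finset.range (B + 1)).filter (· ∈ P.s)

lemma mem_I {B n : ℕ} : n ∈ P.I B ↔ n ≤ B ∧ n ∈ P.s := by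
  simp [I]

lemma card_I_le (B : ℕ) : (P.I B).card ≤ B + 1 := by
  classical
  unfold I
  exact (Finset.card_filter_le _ _).trans (by simp)

lemma le_card_I (B : ℕ) : B + 1 ≤ (P.I B).card + G := by
  have h : Finset.range (B + 1) ⊆ P.I B ∪ Finset.range G := by
    intro n hn
    simp only [Finset.mem_union, Finset.mem_range, mem_I] at *
    by_cases h : n < G
    · right; exact h
    · left; exact ⟨by omega, P.hG n (by omega)⟩
  have := Finset.card_le_card h
  have h2 := Finset.card_union_le (P.I B) (Finset.range G)
  simp at this h2
  omega

lemma card_I_add (B D : ℕ) : (P.I (B + D)).card ≤ (P.I B).card + D := by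
  have h : P.I (B + D) ⊆ P.I B ∪ Finset.Ioc B (B + D) := by
    intro n hn
    simp only [Finset.mem_union, Finset.mem_Ioc, mem_I] at *
    by_cases h : n ≤ B
    · left; exact ⟨h, hn.2⟩
    · right; omega
  have := Finset.card_le_card h
  have h2 := Finset.card_union_le (P.I B) (Finset.Ioc B (B + D))
  simp at this h2
  omega

lemma γ_pow_lt {a b : ℕ} (h : a < b) : P.γ ^ a < P.γ ^ b :=
  pow_lt_pow_right₀ P.hγ h

lemma γ_pow_le {a b : ℕ} : P.γ ^ a ≤ P.γ ^ b ↔ a ≤ b :=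
  pow_le_pow_iff_right₀ P.hγ

lemma γ_ne : P.γ ≠ 0 := (lt_trans zero_lt_one P.hγ).ne.symm

/-- Sums of elements with distinct pole orders. -/
lemma sum_val {ι : Type*} (t : Finset ι) (f : ι → A) (w : ι → ℕ) (hw : Set.InjOn w t)
    (hf : ∀ i ∈ t, P.v (f i) ^ P.M = P.γ ^ w i) (ht : t.Nonempty) :
    ∃ i ∈ t, (∀ j ∈ t, w j ≤ w i) ∧ P.v (∑ i ∈ t, f i) ^ P.M = P.γ ^ w i := by
  classical
  obtain ⟨i, hi, hmax⟩ := t.exists_max_image w ht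
  refine ⟨i, hi, hmax, ?_⟩
  rw [P.v.map_sum_eq_of_lt hi, hf i hi]
  intro j hj
  simp only [Finset.mem_sdiff, Finset.mem_singleton] at hj
  have : w j < w i := lt_of_le_of_ne (hmax j hj.1) (fun h => hj.2 (hw hj.1 hi h))
  refine lt_of_pow_lt_pow_left₀ P.M zero_le ?_
  rw [hf i hi, hf j hj.1]
  exact P.γ_pow_lt this

lemma val_smul {c : K} (hc : c ≠ 0) (a : A) : P.v (c • a) = P.v a := by
  rw [Algebra.smul_def, map_mul, P.hvK c hc, one_mul]

lemma val_smul_le (c : K) (a : A) : P.v (c • a) ≤ P.v a := by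
  by_cases hc : c = 0
  · simp [hc]
  · rw [P.val_smul hc]

/-- value of a combination of basis elements -/
lemma comb_val (t : Finset ℕ) (ht : ∀ n ∈ t, n ∈ P.s) (c : ℕ → K) (hc : ∃ n ∈ t, c n ≠ 0) :
    ∃ n ∈ t, c n ≠ 0 ∧ (∀ k ∈ t, c k ≠ 0 → k ≤ n) ∧
      P.v (∑ n ∈ t, c n • P.m n) ^ P.M = P.γ ^ n := by
  classical
  obtain ⟨n, hn, h1, h2⟩ := P.sum_val (t.filter (fun n => c n ≠ 0)) (fun n => c n • P.m n) id
    (Set.injOn_id _) (by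
      intro i hi
      simp only [Finset.mem_filter] at hi
      rw [P.val_smul hi.2, P.hm i (ht i hi.1)]; rfl)
    (by obtain ⟨n, hn, h⟩ := hc; exact ⟨n, by simp [hn, h]⟩)
  simp only [Finset.mem_filter] at hn
  refine ⟨n, hn.1, hn.2, fun k hk hk2 => h1 k (by simp [hk, hk2]), ?_⟩
  rw [id] at h2
  rw [← h2, Finset.sum_filter_of_ne]
  intro x _ hx hx2
  simp [hx2] at hx

lemma exists_rep (a : A) : ∃ (t : Finset ℕ) (c : ℕ → K), (∀ n ∈ t, n ∈ P.s) ∧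
    (∀ n ∈ t, c n ≠ 0) ∧ a = ∑ n ∈ t, c n • P.m n := by
  have h := P.hspan a
  rw [Finsupp.mem_span_image_iff_linearCombination] at h
  obtain ⟨l, hl, h⟩ := h
  refine ⟨l.support, l, ?_, ?_, ?_⟩
  · intro n hn
    exact (Finsupp.mem_supported _ _).1 hl hn
  · intro n hn; simpa using hn
  · rw [← h, Finsupp.linearCombination_apply]; rfl

lemma exists_deg {a : A} (ha : a ≠ 0) : ∃ n, P.v a ^ P.M = P.γ ^ n := by
  obtain ⟨t, c, h1, h2, rfl⟩ := P.exists_rep a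
  have : t.Nonempty := by
    rw [Finset.nonempty_iff_ne_empty]; rintro rfl; simp at ha
  obtain ⟨n, hn⟩ := this
  obtain ⟨k, _, _, _, h⟩ := P.comb_val t h1 c ⟨n, hn, h2 n hn⟩
  exact ⟨k, h⟩

lemma val_ne_zero {a : A} (ha : a ≠ 0) : P.v a ≠ 0 := by
  obtain ⟨n, hn⟩ := P.exists_deg ha
  intro h
  rw [h, zero_pow P.hM] at hn
  exact pow_ne_zero n P.γ_ne hn.symm

/-- elements of pole order at most `B` -/
noncomputable def L (B : ℕ) : Submodule K A := Submodule.span K (P.m '' (P.I B : Set ℕ))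

lemma mem_L {B : ℕ} {a : A} : a ∈ P.L B ↔ P.v a ^ P.M ≤ P.γ ^ B := by
  constructor
  · intro h
    unfold L at h
    induction h using Submodule.span_induction with
    | mem x hx =>
      obtain ⟨n, hn, rfl⟩ := hx
      have := P.mem_I.1 hn
      rw [P.hm n this.2]
      exact P.γ_pow_le.2 this.1
    | zero => simp [zero_pow P.hM]
    | add x y _ _ hx hy =>
      rcases le_total (P.v x) (P.v y) with h | h
      · exact le_trans (pow_le_pow_left₀ zero_le (P.v.map_add_le h le_rfl) _) hy
      · exact le_trans (pow_le_pow_left₀ zero_le (P.v.map_add_le le_rfl h) _) hx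
    | smul c x _ hx =>
      exact le_trans (pow_le_pow_left₀ zero_le (P.val_smul_le c x) _) hx
  · intro h
    obtain ⟨t, c, h1, h2, rfl⟩ := P.exists_rep a
    rcases t.eq_empty_or_nonempty with rfl | ⟨n, hn⟩
    · simp
    · obtain ⟨k, hk, _, hmax, h3⟩ := P.comb_val t h1 c ⟨n, hn, h2 n hn⟩
      rw [h3, P.γ_pow_le] at h
      refine Submodule.sum_mem _ fun j hj => Submodule.smul_mem _ _ (Submodule.subset_span ?_)
      exact ⟨j, P.mem_I.2 ⟨(hmax j hj (h2 j hj)).trans h, h1 j hj⟩, rfl⟩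

lemma linInd (B : ℕ) : LinearIndependent K (fun n : P.I B => P.m n) := by
  classical
  rw [Fintype.linearIndependent_iff]
  intro g hg i
  by_contra hi
  let c : ℕ → K := fun n => if h : n ∈ P.I B then g ⟨n, h⟩ else 0
  obtain ⟨n, _, _, _, h⟩ := P.comb_val (P.I B) (fun n hn => (P.mem_I.1 hn).2) c
    ⟨i, i.2, by simpa [c] using hi⟩
  have : ∑ n ∈ P.I B, c n • P.m n = 0 := by
    rw [← hg, ← Finset.sum_coe_sort]
    exact Finset.sum_congr rfl fun x _ => by simp [c]
  rw [this, map_zero, zero_pow P.hM] at h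
  exact pow_ne_zero n P.γ_ne h.symm

lemma L_eq (B : ℕ) : P.L B = Submodule.span K (Set.range (fun n : P.I B => P.m n)) := by
  unfold L
  congr 1
  ext x
  simp

instance (B : ℕ) : FiniteDimensional K (P.L B) := by
  rw [L_eq]; exact FiniteDimensional.span_of_finite K (Set.finite_range _)

lemma finrank_L (B : ℕ) : Module.finrank K (P.L B) = (P.I B).card := by
  rw [L_eq, finrank_span_eq_card (P.linInd B), Fintype.card_coe]

lemma L_mono {a b : ℕ} (h : a ≤ b) : P.L a ≤ P.L b := fun x hx =>
  P.mem_L.2 ((P.mem_L.1 hx).trans (P.γ_pow_le.2 h))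

lemma exists_L (a : A) : ∃ B, a ∈ P.L B := by
  by_cases ha : a = 0
  · exact ⟨0, ha ▸ Submodule.zero_mem _⟩
  · obtain ⟨n, hn⟩ := P.exists_deg ha
    exact ⟨n, P.mem_L.2 hn.le⟩

lemma mul_mem_L {a b : A} {x y : ℕ} (ha : a ∈ P.L x) (hb : b ∈ P.L y) : a * b ∈ P.L (x + y) := by
  rw [mem_L] at *
  rw [map_mul, mul_pow, pow_add]
  exact mul_le_mul' ha hb

lemma pow_mem_L {a : A} {x : ℕ} (ha : a ∈ P.L x) (k : ℕ) : a ^ k ∈ P.L (x * k) := by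
  rw [mem_L] at *
  rw [map_pow, ← pow_mul, mul_comm, pow_mul, pow_mul]
  exact pow_le_pow_left₀ zero_le ha _

lemma m_mem_L {n B : ℕ} (hn : n ∈ P.I B) : P.m n ∈ P.L B :=
  Submodule.subset_span ⟨n, hn, rfl⟩


lemma exists_sep (S : Finset (A →ₐ[K] K)) (φ : A →ₐ[K] K) :
    ∃ e : A, φ e = 1 ∧ ∀ χ ∈ S, χ ≠ φ → χ e = 0 := by
  classical
  induction S using Finset.induction_on with
  | empty => exact ⟨1, by simp, by simp⟩
  | insert χ S hχ ih =>
    obtain ⟨e, he, h⟩ := ih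
    by_cases hc : χ = φ
    · refine ⟨e, he, ?_⟩
      intro x hx hne
      rcases Finset.mem_insert.1 hx with rfl | hx
      · exact absurd hc hne
      · exact h x hx hne
    · obtain ⟨a, ha⟩ : ∃ a, χ a ≠ φ a := by
        by_contra! hh; exact hc (AlgHom.ext hh)
      have hne : φ a - χ a ≠ 0 := sub_ne_zero.2 (Ne.symm ha)
      refine ⟨e * ((φ a - χ a)⁻¹ • (a - algebraMap K A (χ a))), ?_, ?_⟩
      · simp [he, hne]
      · intro x hx hne
        rcases Finset.mem_insert.1 hx with rfl | hx
        · simp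
        · simp [h x hx hne]

/-- number of zeros is at most number of poles -/
lemma zeros_le (S : Finset (A →ₐ[K] K)) (h : A) (h0 : h ≠ 0) (D : ℕ) (hD : h ∈ P.L D)
    (hS : ∀ φ ∈ S, φ h = 0) : S.card ≤ D := by
  classical
  choose e he1 he2 using exists_sep S
  choose B hB using fun φ => P.exists_L (e φ)
  let C := S.sup B
  let ev : P.L (C + D) →ₗ[K] (S → K) :=
    LinearMap.pi fun φ => (φ.1.toLinearMap).comp (P.L (C + D)).subtype
  have hsurj : LinearMap.range ev = ⊤ := by
    rw [LinearMap.range_eq_top]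
    intro f
    refine ⟨∑ φ : S, f φ • ⟨e φ.1, P.L_mono ((Finset.le_sup φ.2).trans
      (Nat.le_add_right C D)) (hB φ.1)⟩, ?_⟩
    ext χ
    simp only [ev, map_sum, map_smul, LinearMap.pi_apply,
      LinearMap.comp_apply, Submodule.subtype_apply, AlgHom.toLinearMap_apply, smul_eq_mul]
    rw [Finset.sum_eq_single χ]
    · rw [he1, mul_one]
    · intro φ _ hne
      rw [he2 φ.1 χ.1 χ.2 (fun h => hne (Subtype.ext h.symm)), mul_zero]
    · simp
  have hrn := LinearMap.finrank_range_add_finrank_ker ev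
  rw [hsurj, finrank_top, Module.finrank_pi, Fintype.card_coe, P.finrank_L] at hrn
  let mu : P.L C →ₗ[K] LinearMap.ker ev :=
    LinearMap.codRestrict _ (LinearMap.restrict (LinearMap.mulLeft K h)
      (p := P.L C) (q := P.L (C + D)) (fun x hx => by
        rw [add_comm]; exact P.mul_mem_L hD hx)) (by
        intro x
        rw [LinearMap.mem_ker]
        ext φ
        simp [ev, LinearMap.restrict_apply, hS φ.1 φ.2])
  have hinj : Function.Injective mu := by
    refine (injective_iff_map_eq_zero mu).2 ?_
    intro x hx
    have hx' : h * x.1 = 0 := by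
      have := congrArg (fun z => z.1.1) hx
      simpa [mu, LinearMap.restrict_apply] using this
    by_contra hne
    have hne' : x.1 ≠ 0 := fun h => hne (Subtype.ext h)
    have := congrArg P.v hx'
    rw [map_mul, map_zero] at this
    rcases mul_eq_zero.1 this with h1 | h1
    · exact P.val_ne_zero h0 h1
    · exact P.val_ne_zero hne' h1
  have hle := LinearMap.finrank_le_finrank_of_injective hinj
  rw [P.finrank_L] at hle
  have := P.card_I_add C D
  omega

theorem bombieri [Fintype K] (P : PoleData K A Γ G) (p : ℕ) [Fact p.Prime] [CharP K p] (k r : ℕ) (hr : r = p ^ k)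
    (hQ : Fintype.card K = r ^ 2) (hrG : (G + 2) ^ 2 < r) (S : Finset (A →ₐ[K] K)) :
    S.card ≤ r ^ 2 + (2 * G + 1) * r := by
  classical
  have hr0 : 0 < r := by omega
  let l := r - 1
  let B := r + 2 * G
  -- the linear system
  let T : (P.I B × P.I l → K) →ₗ[K] P.L (l * r + B) :=
    Fintype.linearCombination K (fun x : P.I B × P.I l =>
      (⟨P.m x.2 ^ r * P.m x.1, P.mul_mem_L (P.pow_mem_L (P.m_mem_L x.2.2) r)
        (P.m_mem_L x.1.2)⟩ : P.L (l * r + B)))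
  have hdim : Module.finrank K (P.L (l * r + B)) < Module.finrank K (P.I B × P.I l → K) := by
    rw [P.finrank_L, Module.finrank_pi, Fintype.card_prod, Fintype.card_coe, Fintype.card_coe]
    have h1 := P.card_I_le (l * r + B)
    have h2 := P.le_card_I B
    have h3 := P.le_card_I l
    have h4 : r + G + 1 ≤ (P.I B).card := by simp only [B] at *; omega
    have h5 : r - G ≤ (P.I l).card := by simp only [l] at *; omega
    refine lt_of_le_of_lt h1 (lt_of_lt_of_le ?_ (Nat.mul_le_mul h4 h5))
    have hG : G ≤ r := by nlinarith
    simp only [l, B]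
    zify [hG, hr0]
    have : ((G : ℤ) + 2) ^ 2 < r := by exact_mod_cast hrG
    nlinarith
  obtain ⟨b, hb, hb0⟩ := Submodule.exists_mem_ne_zero_of_ne_bot
    (LinearMap.ker_ne_bot_of_finrank_lt (f := T) hdim)
  have hsys : ∑ x : P.I B × P.I l, b x • (P.m x.2 ^ r * P.m x.1) = 0 := by
    have := congrArg Subtype.val (LinearMap.mem_ker.1 hb)
    simpa [T, Fintype.linearCombination_apply] using this
  let h : A := ∑ i : P.I B, (∑ j : P.I l, b (i, j) ^ r • P.m j) * P.m i ^ r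
  have hmem : h ∈ P.L (l + B * r) := Submodule.sum_mem _ fun i _ =>
    P.mul_mem_L (Submodule.sum_mem _ fun j _ => Submodule.smul_mem _ _ (P.m_mem_L j.2))
      (P.pow_mem_L (P.m_mem_L i.2) r)
  have hne : h ≠ 0 := by
    let c : ℕ → ℕ → K := fun i j =>
      if hh : i ∈ P.I B ∧ j ∈ P.I l then b (⟨i, hh.1⟩, ⟨j, hh.2⟩) ^ r else 0
    have hs : ∀ i : P.I B, (∑ j : P.I l, b (i, j) ^ r • P.m j) = ∑ j ∈ P.I l, c i j • P.m j := by
      intro i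
      rw [← Finset.sum_coe_sort (P.I l) (fun j => c i j • P.m j)]
      exact Finset.sum_congr rfl fun x _ => by simp [c]
    have hh : h = ∑ i ∈ P.I B, (∑ j ∈ P.I l, c i j • P.m j) * P.m i ^ r := by
      rw [← Finset.sum_coe_sort (P.I B) (fun i => (∑ j ∈ P.I l, c i j • P.m j) * P.m i ^ r)]
      exact Finset.sum_congr rfl fun x _ => by rw [hs]
    let t := (P.I B).filter fun i => ∃ j ∈ P.I l, c i j ≠ 0
    have hh2 : h = ∑ i ∈ t, (∑ j ∈ P.I l, c i j • P.m j) * P.m i ^ r := by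
      rw [hh, Finset.sum_filter_of_ne]
      intro i _ hne
      by_contra! hcon
      apply hne
      rw [Finset.sum_eq_zero, zero_mul]
      intro j hj
      rw [hcon j hj, zero_smul]
    have hw : ∀ i : ℕ, ∃ n : ℕ, i ∈ t → n ≤ l ∧
        P.v (∑ j ∈ P.I l, c i j • P.m j) ^ P.M = P.γ ^ n := by
      intro i
      by_cases hi : i ∈ t
      · obtain ⟨n, hn, _, _, h⟩ := P.comb_val (P.I l) (fun n hn => (P.mem_I.1 hn).2) (c i)
          (Finset.mem_filter.1 hi).2
        exact ⟨n, fun _ => ⟨(P.mem_I.1 hn).1, h⟩⟩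
      · exact ⟨0, fun h => absurd h hi⟩
    choose w hw using hw
    have htne : t.Nonempty := by
      obtain ⟨x, hx⟩ := Function.ne_iff.1 hb0
      refine ⟨x.1, Finset.mem_filter.2 ⟨x.1.2, x.2, x.2.2, ?_⟩⟩
      simpa [c] using fun h => absurd h hx
    obtain ⟨i, _, _, hv⟩ := P.sum_val t (fun i => (∑ j ∈ P.I l, c i j • P.m j) * P.m i ^ r)
      (fun i => w i + r * i) (by
        intro i hi j hj hij
        have h1 := (hw i hi).1
        have h2 := (hw j hj).1
        have h3 : w i < r := by omega
        have h4 : w j < r := by omega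
        have hij : w i + r * i = w j + r * j := hij
        have := congrArg (· / r) hij
        simpa [Nat.add_mul_div_left _ _ hr0, Nat.div_eq_of_lt h3, Nat.div_eq_of_lt h4] using this)
      (by
        intro i hi
        rw [map_mul, mul_pow, (hw i hi).2, map_pow, ← pow_mul, mul_comm r, pow_mul,
          P.hm i (P.mem_I.1 (Finset.mem_filter.1 hi).1).2, ← pow_mul, pow_add, mul_comm r])
      htne
    rw [← hh2] at hv
    intro h0
    rw [h0, map_zero, zero_pow P.hM] at hv
    exact pow_ne_zero _ P.γ_ne hv.symm
  have hz : ∀ φ ∈ S, φ h = 0 := by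
    intro φ _
    have hK : ∀ x : K, (x ^ r) ^ r = x := by
      intro x
      rw [← pow_mul, ← pow_two, ← hQ, FiniteField.pow_card]
    have : φ h ^ r = 0 := by
      have h2 := congrArg φ hsys
      rw [map_zero] at h2
      rw [← h2]
      have hsp : ∀ {ι : Type _} (s : Finset ι) (f : ι → K),
          (∑ i ∈ s, f i) ^ r = ∑ i ∈ s, f i ^ r := by
        intro ι s f; rw [hr]; exact sum_pow_char_pow p k s f
      simp only [h, map_sum, map_mul, map_smul, map_pow, smul_eq_mul]
      rw [hsp, Fintype.sum_prod_type]
      refine Finset.sum_congr rfl fun i _ => ?_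
      rw [mul_pow, hK, hsp, Finset.sum_mul]
      refine Finset.sum_congr rfl fun j _ => ?_
      rw [mul_pow, hK, mul_assoc]
    exact pow_eq_zero_iff (by omega) |>.1 this
  refine (P.zeros_le S h hne _ hmem hz).trans ?_
  simp only [l, B]
  zify [hr0]
  nlinarith

end PoleData

end Bombieri


section Curve

/-- weight of the monomial `x^i y^j z^k` -/
def wtM (d i j k : ℕ) : ℕ := i * (d * (d + 1)) + j * ((d + 1) * (d + 1)) + k * (d * (d + 2))

lemma wtM_inj {d i j k i' j' k' : ℕ} (hd : 0 < d) (hj : j < d) (hj' : j' < d)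
    (hk : k < d + 1) (hk' : k' < d + 1) (h : wtM d i j k = wtM d i' j' k') :
    i = i' ∧ j = j' ∧ k = k' := by
  unfold wtM at h
  have hz : (i : ℤ) * (d * (d + 1)) + j * ((d + 1) * (d + 1)) + k * (d * (d + 2))
      = i' * (d * (d + 1)) + j' * ((d + 1) * (d + 1)) + k' * (d * (d + 2)) := by exact_mod_cast h
  have h1 : (d : ℤ) ∣ (j : ℤ) - j' := by
    refine ⟨(i' - i) * (d + 1) + (k' - k) * (d + 2) - (j - j') * (d + 2), ?_⟩
    linear_combination hz
  have hjj : (j : ℤ) - j' = 0 := by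
    apply Int.eq_zero_of_abs_lt_dvd h1
    rw [abs_lt]; constructor <;> omega
  have h2 : ((d + 1 : ℕ) : ℤ) ∣ (k : ℤ) - k' := by
    refine ⟨(i - i') * d + (j - j') * (d + 1) + (k - k') * (d + 1), ?_⟩
    push_cast
    linear_combination -hz
  have hkk : (k : ℤ) - k' = 0 := by
    apply Int.eq_zero_of_abs_lt_dvd h2
    rw [abs_lt]; constructor <;> omega
  have hii : ((i : ℤ) - i') * (d * (d + 1)) = 0 := by
    linear_combination hz - (d + 1) * (d + 1) * hjj - d * (d + 2) * hkk
  have : ((d : ℤ) * (d + 1)) ≠ 0 := by positivity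
  have := (mul_eq_zero.1 hii).resolve_right this
  omega

lemma wtM_surj {d n : ℕ} (hd : 0 < d)
    (hn : d * ((d + 1) * (d + 1)) + (d + 1) * (d * (d + 2)) ≤ n) :
    ∃ i j k, j < d ∧ k < d + 1 ∧ n = wtM d i j k := by
  have h1 := Nat.mod_lt n hd
  have h2 := Nat.mod_lt (n * d) (Nat.succ_pos d)
  have e1 := Nat.mod_add_div n d
  have e2 := Nat.mod_add_div (n * d) (d + 1)
  simp only [Nat.succ_eq_add_one] at h2
  generalize n % d = j at *
  generalize n / d = a at *
  generalize (n * d) % (d + 1) = k at *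
  generalize (n * d) / (d + 1) = b at *
  have e1' : (j : ℤ) + d * a = n := by exact_mod_cast e1
  have e2' : (k : ℤ) + (d + 1) * b = n * d := by exact_mod_cast e2
  have key : (n : ℤ) - j * ((d + 1) * (d + 1)) - k * (d * (d + 2)) =
      (d * (d + 1)) * (-n * (d + 2) + a * (d + 1) + b * (d + 2)) := by
    have ej : (j : ℤ) = n - d * a := by linarith
    have ek : (k : ℤ) = n * d - (d + 1) * b := by linarith
    rw [ej, ek]; ring
  have hpos : 0 ≤ (n : ℤ) - j * ((d + 1) * (d + 1)) - k * (d * (d + 2)) := by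
    have a1 : j * ((d + 1) * (d + 1)) ≤ d * ((d + 1) * (d + 1)) := Nat.mul_le_mul_right _ h1.le
    have a2 : k * (d * (d + 2)) ≤ (d + 1) * (d * (d + 2)) := Nat.mul_le_mul_right _ h2.le
    have a3 : j * ((d + 1) * (d + 1)) + k * (d * (d + 2)) ≤ n := by omega
    have : (j : ℤ) * ((d + 1) * (d + 1)) + k * (d * (d + 2)) ≤ n := by exact_mod_cast a3
    linarith
  rw [key] at hpos
  have hdd : (0 : ℤ) < d * (d + 1) := by positivity
  have hi : 0 ≤ (-n * (d + 2) + a * (d + 1) + b * (d + 2) : ℤ) := nonneg_of_mul_nonneg_right hpos hdd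
  obtain ⟨i, hi⟩ := Int.eq_ofNat_of_zero_le hi
  refine ⟨i, j, k, h1, h2, ?_⟩
  rw [hi] at key
  unfold wtM
  zify
  linarith

universe uK

variable {K : Type uK} [Field K]

/-- Existence of the function field with a place at infinity. -/
lemma exists_place (d : ℕ) (hd : 0 < d) (u α β c : K) (hu : u ≠ 0) (hα : α ≠ 0) :
    ∃ (Ω : Type uK) (_ : Field Ω) (_ : Algebra K Ω) (Γ : Type uK)
      (_ : LinearOrderedCommGroupWithZero Γ) (v : Valuation Ω Γ) (x y z : Ω),
      1 < v x ∧ (∀ c : K, c ≠ 0 → v (algebraMap K Ω c) = 1) ∧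
      v y ^ d = v x ^ (d + 1) ∧ v z ^ (d + 1) = v x ^ (d + 2) ∧
      y ^ d = u • (x ^ (d + 1) + x ^ (d - 1)) ∧
      z ^ (d + 1) = x ^ d * z + α • x ^ (d + 2) - c • x ^ (d + 1) + β • x ^ d := by
  let Ω := AlgebraicClosure (RatFunc K)
  let x : Ω := algebraMap (RatFunc K) Ω RatFunc.X
  have hx : x ∉ (integralClosure K Ω).toSubring := by
    intro h
    have h : IsIntegral K x := h
    have h2 : IsIntegral K (RatFunc.X : RatFunc K) :=
      (isIntegral_algebraMap_iff (algebraMap (RatFunc K) Ω).injective).1 h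
    exact RatFunc.transcendental_X h2.isAlgebraic
  obtain ⟨V, hV1, hV2⟩ := Subring.exists_le_valuationSubring_of_isIntegrallyClosedIn hx
  have hKV : ∀ c : K, algebraMap K Ω c ∈ V := fun c => hV1 (isIntegral_algebraMap (x := c))
  obtain ⟨y, hy⟩ := IsAlgClosed.exists_pow_nat_eq (u • (x ^ (d + 1) + x ^ (d - 1))) hd
  obtain ⟨z, hz⟩ : ∃ z : Ω,
      z ^ (d + 1) = x ^ d * z + (α • x ^ (d + 2) - c • x ^ (d + 1) + β • x ^ d) := by
    let q : Polynomial Ω := Polynomial.C (x ^ d) * Polynomial.X +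
      Polynomial.C (α • x ^ (d + 2) - c • x ^ (d + 1) + β • x ^ d)
    have hq : q.degree < ((d + 1 : ℕ) : WithBot ℕ) :=
      lt_of_le_of_lt Polynomial.degree_linear_le (by exact_mod_cast (by omega : 1 < d + 1))
    have hdeg : (Polynomial.X ^ (d + 1) - q).degree = ((d + 1 : ℕ) : WithBot ℕ) := by
      rw [Polynomial.degree_sub_eq_left_of_degree_lt] <;> simp only [Polynomial.degree_X_pow]
      exact hq
    obtain ⟨z, hz⟩ := IsAlgClosed.exists_root (Polynomial.X ^ (d + 1) - q) (by
      rw [hdeg]; exact_mod_cast Nat.succ_ne_zero d)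
    refine ⟨z, ?_⟩
    simp only [q, Polynomial.IsRoot, Polynomial.eval_sub, Polynomial.eval_pow, Polynomial.eval_X,
      Polynomial.eval_add, Polynomial.eval_mul, Polynomial.eval_C] at hz
    exact sub_eq_zero.1 hz
  let v := V.valuation
  have hvx : 1 < v x := by
    by_contra! h
    exact hV2 ((V.valuation_le_one_iff x).1 h)
  have hvK : ∀ c : K, c ≠ 0 → v (algebraMap K Ω c) = 1 := by
    intro c hc
    refine le_antisymm ((V.valuation_le_one_iff _).2 (hKV c)) ?_
    have := (V.valuation_le_one_iff _).2 (hKV c⁻¹)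
    rw [map_inv₀, map_inv₀] at this
    have hne : v (algebraMap K Ω c) ≠ 0 := by simpa using hc
    by_contra! hlt
    exact absurd this (not_le.2 ((one_lt_inv₀ (zero_lt_iff.2 hne)).2 hlt))
  have hsm : ∀ (a : K) (w : Ω), v (a • w) ≤ v w := by
    intro a w
    by_cases ha : a = 0
    · simp [ha]
    · rw [Algebra.smul_def, map_mul, hvK a ha, one_mul]
  have hsm' : ∀ (a : K) (w : Ω), a ≠ 0 → v (a • w) = v w := by
    intro a w ha
    rw [Algebra.smul_def, map_mul, hvK a ha, one_mul]
  have hlt : ∀ {a b : ℕ}, a < b → v x ^ a < v x ^ b := fun h => pow_lt_pow_right₀ hvx h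
  have hvy : v y ^ d = v x ^ (d + 1) := by
    rw [← map_pow, hy, hsm' _ _ hu, v.map_add_eq_of_lt_left, map_pow]
    rw [map_pow, map_pow]; exact hlt (by omega)
  have hrhs : v (α • x ^ (d + 2) - c • x ^ (d + 1) + β • x ^ d) = v x ^ (d + 2) := by
    have e1 : v (α • x ^ (d + 2)) = v x ^ (d + 2) := by rw [hsm' _ _ hα, map_pow]
    have e2 : v (- (c • x ^ (d + 1)) + β • x ^ d) < v x ^ (d + 2) := by
      refine v.map_add_lt ?_ ?_
      · rw [v.map_neg]
        refine lt_of_le_of_lt (hsm _ _) ?_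
        rw [map_pow]; exact hlt (by omega)
      · refine lt_of_le_of_lt (hsm _ _) ?_
        rw [map_pow]; exact hlt (by omega)
    rw [sub_eq_add_neg, add_assoc, v.map_add_eq_of_lt_left, e1]
    rw [e1]; exact e2
  have hvz : v z ^ (d + 1) = v x ^ (d + 2) := by
    have hzx : v x < v z := by
      by_contra! h
      have h1 : v (z ^ (d + 1) - x ^ d * z) = v x ^ (d + 2) := by
        rw [← hrhs, hz]; congr 1; ring
      have h2 : v (z ^ (d + 1) - x ^ d * z) ≤ v x ^ (d + 1) := by
        refine v.map_sub_le ?_ ?_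
        · rw [map_pow]; exact pow_le_pow_left₀ zero_le h _
        · rw [map_mul, map_pow, pow_succ]; exact mul_le_mul' le_rfl h
      rw [h1] at h2
      exact absurd h2 (not_le.2 (hlt (by omega)))
    have h3 : v (x ^ d * z) < v (z ^ (d + 1)) := by
      rw [map_mul, map_pow, map_pow, pow_succ]
      refine mul_lt_mul_of_pos_right ?_ (lt_trans (lt_trans zero_lt_one hvx) hzx)
      exact pow_lt_pow_left₀ hzx zero_le (by omega)
    rw [← map_pow, ← hrhs, ← v.map_sub_eq_of_lt_left h3]
    congr 1
    rw [hz]; ring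
  exact ⟨Ω, inferInstance, inferInstance, V.ValueGroup, inferInstance, v, x, y, z, hvx, hvK, hvy,
    hvz, hy, by rw [hz]; ring⟩

/-- the monomial in a commutative ring -/
def mon3 {A : Type*} [CommRing A] (X Y Z : A) (i j k : ℕ) : A := X ^ i * Y ^ j * Z ^ k

lemma span_normal {A : Type*} [CommRing A] [Algebra K A] (d : ℕ) (hd : 0 < d) (u α β c : K)
    (X Y Z : A) (hY : Y ^ d = u • (X ^ (d + 1) + X ^ (d - 1)))
    (hZ : Z ^ (d + 1) = X ^ d * Z + α • X ^ (d + 2) - c • X ^ (d + 1) + β • X ^ d)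
    (S : Submodule K A) (hS : ∀ i j k, j < d → k < d + 1 → mon3 X Y Z i j k ∈ S) :
    ∀ i j k, mon3 X Y Z i j k ∈ S := by
  have h1 : ∀ j i k, k < d + 1 → mon3 X Y Z i j k ∈ S := by
    intro j
    induction j using Nat.strong_induction_on with
    | _ j ih =>
      intro i k hk
      by_cases hj : j < d
      · exact hS i j k hj hk
      · obtain ⟨t, rfl⟩ := Nat.exists_eq_add_of_le (not_lt.1 hj)
        have : mon3 X Y Z i (d + t) k =
            u • (mon3 X Y Z (i + (d + 1)) t k + mon3 X Y Z (i + (d - 1)) t k) := by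
          unfold mon3
          rw [pow_add Y, hY, pow_add, pow_add X i (d - 1)]
          simp only [Algebra.smul_def]
          ring
        rw [this]
        exact S.smul_mem _ (S.add_mem (ih t (by omega) _ _ hk) (ih t (by omega) _ _ hk))
  intro i j k
  induction k using Nat.strong_induction_on generalizing i with
  | _ k ih =>
    by_cases hk : k < d + 1
    · exact h1 j i k hk
    · obtain ⟨t, rfl⟩ := Nat.exists_eq_add_of_le (not_lt.1 hk)
      have : mon3 X Y Z i j (d + 1 + t) = mon3 X Y Z (i + d) j (t + 1) +
          α • mon3 X Y Z (i + (d + 2)) j t - c • mon3 X Y Z (i + (d + 1)) j t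
          + β • mon3 X Y Z (i + d) j t := by
        unfold mon3
        rw [pow_add Z, hZ]
        simp only [Algebra.smul_def]
        ring
      rw [this]
      refine S.add_mem (S.sub_mem (S.add_mem (ih _ (by omega) _) ?_) ?_) ?_
      all_goals exact S.smul_mem _ (ih _ (by omega) _)

open MvPolynomial in
/-- relations ideal -/
noncomputable def curveIdeal (d : ℕ) (u α β c : K) : Ideal (MvPolynomial (Fin 3) K) :=
  Ideal.span {X 1 ^ d - u • (X 0 ^ (d + 1) + X 0 ^ (d - 1)),
    X 2 ^ (d + 1) - (X 0 ^ d * X 2 + α • X 0 ^ (d + 2) - c • X 0 ^ (d + 1) + β • X 0 ^ d)}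

/-- coordinate ring of the curve -/
abbrev CurveRing (d : ℕ) (u α β c : K) := MvPolynomial (Fin 3) K ⧸ curveIdeal d u α β c

lemma curve_lift_aux {B : Type*} [CommRing B] [Algebra K B] (d : ℕ) (u α β c : K)
    (x y z : B) (hY : y ^ d = u • (x ^ (d + 1) + x ^ (d - 1)))
    (hZ : z ^ (d + 1) = x ^ d * z + α • x ^ (d + 2) - c • x ^ (d + 1) + β • x ^ d) :
    ∀ a ∈ curveIdeal d u α β c, MvPolynomial.aeval (R := K) ![x, y, z] a = 0 := by
  intro a ha
  have : curveIdeal d u α β c ≤ RingHom.ker (MvPolynomial.aeval (R := K) ![x, y, z]) := by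
    unfold curveIdeal
    rw [Ideal.span_le]
    rintro _ (rfl | rfl)
    · simp [RingHom.mem_ker, hY]
    · simp [RingHom.mem_ker, hZ]
  exact this ha

/-- the algebra hom attached to a point -/
noncomputable def curveLift {B : Type*} [CommRing B] [Algebra K B] (d : ℕ) (u α β c : K)
    (x y z : B) (hY : y ^ d = u • (x ^ (d + 1) + x ^ (d - 1)))
    (hZ : z ^ (d + 1) = x ^ d * z + α • x ^ (d + 2) - c • x ^ (d + 1) + β • x ^ d) :
    CurveRing d u α β c →ₐ[K] B :=
  Ideal.Quotient.liftₐ _ (MvPolynomial.aeval ![x, y, z]) (curve_lift_aux d u α β c x y z hY hZ)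

/-- coordinate functions -/
noncomputable def curveX (d : ℕ) (u α β c : K) (i : Fin 3) : CurveRing d u α β c :=
  Ideal.Quotient.mk _ (MvPolynomial.X i)

lemma curveLift_X {B : Type*} [CommRing B] [Algebra K B] (d : ℕ) (u α β c : K)
    (x y z : B) (hY : y ^ d = u • (x ^ (d + 1) + x ^ (d - 1)))
    (hZ : z ^ (d + 1) = x ^ d * z + α • x ^ (d + 2) - c • x ^ (d + 1) + β • x ^ d) (i : Fin 3) :
    curveLift d u α β c x y z hY hZ (curveX d u α β c i) = ![x, y, z] i := by
  unfold curveLift curveX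
  erw [Ideal.Quotient.liftₐ_apply, Ideal.Quotient.lift_mk]
  simp

lemma curveX_rel1 (d : ℕ) (u α β c : K) :
    curveX d u α β c 1 ^ d =
      u • (curveX d u α β c 0 ^ (d + 1) + curveX d u α β c 0 ^ (d - 1)) := by
  have : (Ideal.Quotient.mkₐ K (curveIdeal d u α β c)) (MvPolynomial.X 1 ^ d -
      u • (MvPolynomial.X 0 ^ (d + 1) + MvPolynomial.X 0 ^ (d - 1))) = 0 := by
    rw [Ideal.Quotient.mkₐ_eq_mk, Ideal.Quotient.eq_zero_iff_mem]
    exact Ideal.subset_span (by simp)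
  rw [map_sub, map_smul, map_add, map_pow, map_pow, map_pow] at this
  exact sub_eq_zero.1 this

lemma curveX_rel2 (d : ℕ) (u α β c : K) :
    curveX d u α β c 2 ^ (d + 1) = curveX d u α β c 0 ^ d * curveX d u α β c 2 +
      α • curveX d u α β c 0 ^ (d + 2) - c • curveX d u α β c 0 ^ (d + 1)
      + β • curveX d u α β c 0 ^ d := by
  have : (Ideal.Quotient.mkₐ K (curveIdeal d u α β c)) (MvPolynomial.X 2 ^ (d + 1) -
      (MvPolynomial.X 0 ^ d * MvPolynomial.X 2 + α • MvPolynomial.X 0 ^ (d + 2)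
      - c • MvPolynomial.X 0 ^ (d + 1) + β • MvPolynomial.X 0 ^ d)) = 0 := by
    rw [Ideal.Quotient.mkₐ_eq_mk, Ideal.Quotient.eq_zero_iff_mem]
    exact Ideal.subset_span (by simp)
  rw [map_sub, map_add, map_sub, map_add, map_smul, map_smul, map_smul, map_mul] at this
  simp only [map_pow] at this
  exact sub_eq_zero.1 this

lemma curve_span_top (d : ℕ) (u α β c : K) (S : Submodule K (CurveRing d u α β c))
    (hS : ∀ i j k, mon3 (curveX d u α β c 0) (curveX d u α β c 1) (curveX d u α β c 2) i j k ∈ S)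
    (a : CurveRing d u α β c) : a ∈ S := by
  obtain ⟨p, rfl⟩ := Ideal.Quotient.mkₐ_surjective K _ a
  induction p using MvPolynomial.monomial_add_induction_on with
  | C a =>
    have := S.smul_mem a (hS 0 0 0)
    simp only [mon3, pow_zero, mul_one] at this
    have e : Ideal.Quotient.mkₐ K (curveIdeal d u α β c) (MvPolynomial.C a) = a • 1 :=
      ((Ideal.Quotient.mkₐ K _).commutes a).trans (Algebra.algebraMap_eq_smul_one a)
    rw [e]
    exact this
  | monomial_add a b f _ _ ih =>
    rw [map_add]
    refine S.add_mem ?_ ih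
    rw [MvPolynomial.monomial_eq, ← MvPolynomial.smul_eq_C_mul, map_smul, Finsupp.prod_fintype]
    · refine S.smul_mem _ ?_
      rw [map_prod, Fin.prod_univ_three]
      simp only [map_pow]
      exact hS _ _ _
    · simp

/-- genus-like constant -/
def curveG (d : ℕ) : ℕ := d * ((d + 1) * (d + 1)) + (d + 1) * (d * (d + 2))

open Classical in
lemma exists_poleData (d : ℕ) (hd : 0 < d) (u α β c : K) (hu : u ≠ 0) (hα : α ≠ 0) :
    ∃ (Γ : Type uK) (_ : LinearOrderedCommGroupWithZero Γ),
      Nonempty (PoleData K (CurveRing d u α β c) Γ (curveG d)) := by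
  obtain ⟨Ω, _, _, Γ, _, v, x, y, z, hvx, hvK, hvy, hvz, hy, hz⟩ :=
    exists_place d hd u α β c hu hα
  refine ⟨Γ, inferInstance, ⟨?_⟩⟩
  let θ := curveLift d u α β c x y z hy hz
  let w : Valuation (CurveRing d u α β c) Γ := v.comap θ.toRingHom
  let P : ℕ → ℕ × ℕ × ℕ → Prop := fun n t => t.2.1 < d ∧ t.2.2 < d + 1 ∧ n = wtM d t.1 t.2.1 t.2.2
  let mo : ℕ × ℕ × ℕ → CurveRing d u α β c := fun t =>
    mon3 (curveX d u α β c 0) (curveX d u α β c 1) (curveX d u α β c 2) t.1 t.2.1 t.2.2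
  let m : ℕ → CurveRing d u α β c := fun n =>
    if h : ∃ t, P n t then mo h.choose else 0
  refine { v := w, γ := v x, hγ := hvx, M := d * (d + 1), hM := by positivity, hvK := ?_,
           m := m, s := {n | ∃ t, P n t}, hm := ?_, hspan := ?_, hG := ?_ }
  · intro e he
    have : w (algebraMap K _ e) = v (θ (algebraMap K _ e)) := rfl
    rw [this, AlgHom.commutes, hvK e he]
  · intro n hn
    have hn' : ∃ t, P n t := hn
    have h1 : m n = mo hn'.choose := dif_pos hn'
    obtain ⟨_, _, h2⟩ := hn'.choose_spec
    rw [h1]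
    generalize hn'.choose = t at *
    have : w (mo t) = v (θ (mo t)) := rfl
    rw [this]
    have h3 : θ (mo t) = x ^ t.1 * y ^ t.2.1 * z ^ t.2.2 := by
      simp only [mo, mon3, map_mul, map_pow, θ, curveLift_X]
      rfl
    rw [h3, map_mul, map_mul, map_pow, map_pow, map_pow, h2]
    calc _ = v x ^ (t.1 * (d * (d + 1))) * (v y ^ d) ^ (t.2.1 * (d + 1)) *
          (v z ^ (d + 1)) ^ (t.2.2 * d) := by
            simp only [mul_pow, ← pow_mul]
            ring_nf
      _ = _ := by
            rw [hvy, hvz]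
            unfold wtM
            simp only [← pow_mul, ← pow_add]
            ring_nf
  · refine curve_span_top d u α β c _ ?_
    refine span_normal d hd u α β c _ _ _ (curveX_rel1 ..) (curveX_rel2 ..) _ ?_
    intro i j k hj hk
    apply Submodule.subset_span
    have hP : P (wtM d i j k) (i, j, k) := ⟨hj, hk, rfl⟩
    have hn' : ∃ t, P (wtM d i j k) t := ⟨_, hP⟩
    refine ⟨wtM d i j k, hn', ?_⟩
    have h1 : m (wtM d i j k) = mo hn'.choose := dif_pos hn'
    obtain ⟨h2, h3, h4⟩ := hn'.choose_spec
    rw [h1]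
    generalize hn'.choose = t at *
    obtain ⟨rfl, rfl, rfl⟩ := wtM_inj hd hj h2 hk h3 h4
    rfl
  · intro n hn
    obtain ⟨i, j, k, h1, h2, h3⟩ := wtM_surj hd hn
    exact ⟨(i, j, k), h1, h2, h3⟩

open Classical in
theorem curve_count [Fintype K] (p : ℕ) [Fact p.Prime] [CharP K p] (e r : ℕ) (hr : r = p ^ e)
    (hQ : Fintype.card K = r ^ 2) (d : ℕ) (hd : 0 < d) (hrG : (curveG d + 2) ^ 2 < r)
    (u α β c : K) (hu : u ≠ 0) (hα : α ≠ 0) (S : Finset (K × K × K))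
    (hS : ∀ t ∈ S, t.2.1 ^ d = u * (t.1 ^ (d + 1) + t.1 ^ (d - 1)) ∧
      t.2.2 ^ (d + 1) = t.1 ^ d * t.2.2 + α * t.1 ^ (d + 2) - c * t.1 ^ (d + 1) + β * t.1 ^ d) :
    S.card ≤ r ^ 2 + (2 * curveG d + 1) * r := by
  obtain ⟨Γ, _, ⟨P⟩⟩ := exists_poleData d hd u α β c hu hα
  let f : {t // t ∈ S} → (CurveRing d u α β c →ₐ[K] K) := fun t =>
    curveLift d u α β c t.1.1 t.1.2.1 t.1.2.2 (hS t.1 t.2).1 (hS t.1 t.2).2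
  have hf : Function.Injective f := by
    intro s t h
    have h0 := fun i => DFunLike.congr_fun h (curveX d u α β c i)
    simp only [f, curveLift_X] at h0
    have a0 := h0 0
    have a1 := h0 1
    have a2 := h0 2
    simp at a0 a1 a2
    exact Subtype.ext (Prod.ext a0 (Prod.ext a1 a2))
  have := P.bombieri p e r hr hQ hrG (S.attach.image f)
  rwa [Finset.card_image_of_injective _ hf, Finset.card_attach] at this

end Curve


section CountC

variable {E K : Type*} [Field E] [Fintype E] [Field K] [Fintype K] [Algebra E K]

lemma hilbert90_mul (w : K) (hw : Algebra.norm E w = 1) :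
    ∃ y : K, y ≠ 0 ∧ y ^ (Fintype.card E - 1) = w := by
  have hw0 : w ≠ 0 := by
    rintro rfl
    simp at hw
  have h1 : w ^ ((Nat.card K - 1) / (Nat.card E - 1)) = 1 := by
    rw [← FiniteField.algebraMap_norm_eq_pow, hw, map_one]
  obtain ⟨g, hg⟩ := IsCyclic.exists_generator (α := Kˣ)
  obtain ⟨j, hj⟩ := Subgroup.mem_zpowers_iff.1 (hg (Units.mk0 w hw0))
  have hord : orderOf g = Nat.card K - 1 := by
    rw [orderOf_eq_card_of_forall_mem_zpowers hg, Nat.card_units]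
  have hdvd : Nat.card E - 1 ∣ Nat.card K - 1 := by
    rw [Module.natCard_eq_pow_finrank (K := E) (V := K)]
    simpa using Nat.sub_dvd_pow_sub_pow (Nat.card E) 1 (Module.finrank E K)
  obtain ⟨t, ht⟩ := hdvd
  have hE : 1 < Nat.card E := Finite.one_lt_card
  have hK : 1 < Nat.card K := Finite.one_lt_card
  have ht0 : t ≠ 0 := by
    rintro rfl
    omega
  have h2 : (g ^ j) ^ t = 1 := by
    rw [hj]
    apply Units.ext
    rw [ht, Nat.mul_div_cancel_left _ (by omega)] at h1
    simpa using h1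
  have h3 : ((orderOf g : ℕ) : ℤ) ∣ j * t := by
    rw [orderOf_dvd_iff_zpow_eq_one, zpow_mul]
    exact_mod_cast h2
  rw [hord, ht, Nat.cast_mul] at h3
  obtain ⟨i, rfl⟩ := Int.dvd_of_mul_dvd_mul_right (by exact_mod_cast ht0) h3
  refine ⟨(g ^ i : Kˣ), Units.ne_zero _, ?_⟩
  have : (g ^ i) ^ (Fintype.card E - 1) = Units.mk0 w hw0 := by
    rw [← hj, mul_comm, zpow_mul, ← Nat.card_eq_fintype_card, zpow_natCast]
  have := congrArg (Units.val) this
  simpa using this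

lemma hilbert90_add (w : K) (hw : Algebra.trace E K w = 0) :
    ∃ z : K, z ^ (Fintype.card E) - z = w := by
  let f : K →ₗ[E] K := (FiniteField.frobeniusAlgEquivOfAlgebraic E K).toLinearMap - LinearMap.id
  have hf : ∀ z, f z = z ^ (Fintype.card E) - z := fun z => rfl
  have hle : LinearMap.range f ≤ LinearMap.ker (Algebra.trace E K) := by
    rintro _ ⟨z, rfl⟩
    rw [LinearMap.mem_ker]
    change Algebra.trace E K ((FiniteField.frobeniusAlgEquivOfAlgebraic E K) z - z) = 0
    rw [map_sub, Algebra.trace_eq_of_algEquiv, sub_self]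
  have hker : Module.finrank E (LinearMap.ker f) ≤ 1 := by
    refine finrank_le_one ⟨1, ?_⟩ ?_
    · simp [LinearMap.mem_ker, hf]
    · rintro ⟨z, hz⟩
      rw [LinearMap.mem_ker, hf, sub_eq_zero] at hz
      have : z ∈ (⊥ : IntermediateField E K) := by
        rw [IsGalois.mem_bot_iff_fixed]
        intro g
        obtain ⟨⟨i, _⟩, rfl⟩ := (FiniteField.bijective_frobeniusAlgEquivOfAlgebraic_pow E K).2 g
        change ((FiniteField.frobeniusAlgEquivOfAlgebraic E K) ^ i) z = z
        rw [AlgEquiv.coe_pow]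
        exact Function.iterate_fixed hz i
      obtain ⟨a, ha⟩ := IntermediateField.mem_bot.1 this
      refine ⟨a, ?_⟩
      apply Subtype.ext
      simp [Algebra.smul_def, ha]
  have h1 := LinearMap.finrank_range_add_finrank_ker f
  have h2 := LinearMap.finrank_range_add_finrank_ker (Algebra.trace E K)
  have h3 : Module.finrank E (LinearMap.range (Algebra.trace E K)) = 1 := by
    rw [LinearMap.range_eq_top.2 (Algebra.trace_surjective E K)]
    simp
  have h4 := Submodule.eq_of_le_of_finrank_le hle (by omega)
  have : w ∈ LinearMap.range f := by rw [h4]; exact hw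
  obtain ⟨z, hz⟩ := this
  exact ⟨z, hz⟩

open Classical in
/-- the fiber set -/
noncomputable def cset (K : Type*) [Field K] [Fintype K] [Algebra E K] (α β u c : E) : Finset K :=
  Finset.univ.filter (fun x => x ≠ 0 ∧ Algebra.norm E (x + x⁻¹) = u ∧
    Algebra.trace E K (α • x + β • x⁻¹) = c)

open Classical in
lemma cset_count (p : ℕ) [Fact p.Prime] [CharP K p] (e r : ℕ) (hr : r = p ^ e)
    (hQ : Fintype.card K = r ^ 2) (hrG : (curveG (Fintype.card E - 1) + 2) ^ 2 < r)
    (α β u c : E) (hα : α ≠ 0) (hu : u ≠ 0) :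
    (Fintype.card E * (Fintype.card E - 1)) * (cset K α β u c).card ≤
      r ^ 2 + (2 * curveG (Fintype.card E - 1) + 1) * r := by
  have hE1 : 1 < Fintype.card E := Fintype.one_lt_card
  obtain ⟨u', hu'⟩ := FiniteField.norm_surjective E K u
  obtain ⟨c', hc'⟩ := Algebra.trace_surjective E K c
  have hu'0 : u' ≠ 0 := by
    rintro rfl
    simp at hu'
    exact hu hu'.symm
  have hex : ∀ x : K, ∃ y z : K, x ∈ cset K α β u c → y ≠ 0 ∧
      y ^ (Fintype.card E - 1) = u'⁻¹ * (x + x⁻¹) ∧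
      z ^ (Fintype.card E) - z = α • x + β • x⁻¹ - c' := by
    intro x
    by_cases hx : x ∈ cset K α β u c
    · simp only [cset, Finset.mem_filter, Finset.mem_univ, true_and] at hx
      obtain ⟨y, hy0, hy⟩ := hilbert90_mul (E := E) (u'⁻¹ * (x + x⁻¹)) (by
        rw [map_mul, hx.2.1, Algebra.norm_inv, hu', inv_mul_cancel₀ hu])
      obtain ⟨z, hz⟩ := hilbert90_add (E := E) (α • x + β • x⁻¹ - c') (by
        rw [map_sub, hx.2.2, hc', sub_self])
      exact ⟨y, z, fun _ => ⟨hy0, hy, hz⟩⟩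
    · exact ⟨0, 0, fun h => absurd h hx⟩
  choose y0 z0 h0 using hex
  let f : K × Eˣ × E → K × K × K := fun t =>
    (t.1, t.1 * (y0 t.1 * algebraMap E K t.2.1), t.1 * (z0 t.1 + algebraMap E K t.2.2))
  have hinj : Set.InjOn f ((cset K α β u c) ×ˢ (Finset.univ : Finset (Eˣ × E)) : Finset _) := by
    rintro ⟨x, a, b⟩ hx ⟨x', a', b'⟩ hx' h
    simp only [Finset.coe_product, Set.mem_prod, Finset.mem_coe] at hx hx'
    simp only [f, Prod.mk.injEq] at h
    obtain ⟨rfl, h1, h2⟩ := h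
    have hx0 : x ≠ 0 := by
      have := hx.1
      simp only [cset, Finset.mem_filter] at this
      exact this.2.1
    have hy := (h0 x hx.1).1
    have e1 := mul_left_cancel₀ hy (mul_left_cancel₀ hx0 h1)
    have e2 := add_left_cancel (mul_left_cancel₀ hx0 h2)
    have e3 := (algebraMap E K).injective e1
    have e4 := (algebraMap E K).injective e2
    rw [Units.ext e3, e4]
  have hcount := curve_count p e r hr hQ (Fintype.card E - 1) (by omega) hrG (u'⁻¹)
    (algebraMap E K α) (algebraMap E K β) c' (inv_ne_zero hu'0) (by simpa using hα)
    (((cset K α β u c) ×ˢ (Finset.univ : Finset (Eˣ × E))).image f) (by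
      intro t ht
      obtain ⟨⟨x, a, b⟩, hx, rfl⟩ := Finset.mem_image.1 ht
      have hx := (Finset.mem_product.1 hx).1
      obtain ⟨_, hy, hz⟩ := h0 x hx
      have hx0 : x ≠ 0 := by
        simp only [cset, Finset.mem_filter] at hx
        exact hx.2.1
      obtain ⟨d, hd⟩ : ∃ d, Fintype.card E = d + 2 := ⟨Fintype.card E - 2, by omega⟩
      have ha : (algebraMap E K (a : E)) ^ (Fintype.card E - 1) = 1 := by
        rw [← map_pow, FiniteField.pow_card_sub_one_eq_one _ a.ne_zero, map_one]
      have hb : (z0 x + algebraMap E K b) ^ (Fintype.card E) =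
          z0 x ^ Fintype.card E + algebraMap E K b := by
        have := map_add (FiniteField.frobeniusAlgHom E K) (z0 x) (algebraMap E K b)
        simp only [FiniteField.coe_frobeniusAlgHom] at this
        rw [this, ← map_pow, FiniteField.pow_card]
      rw [Algebra.smul_def, Algebra.smul_def] at hz
      rw [hd] at hy hz ha hb
      rw [show d + 2 - 1 = d + 1 from rfl] at hy ha
      simp only [f, hd, show d + 2 - 1 = d + 1 from rfl, Nat.add_sub_cancel]
      constructor
      · rw [mul_pow, mul_pow, ha, hy]
        field_simp
        ring
      · rw [show d + 1 + 1 = d + 2 from rfl, mul_pow, hb, eq_add_of_sub_eq hz]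
        field_simp
        ring)
  rw [Finset.card_image_of_injOn hinj, Finset.card_product] at hcount
  simp only [Finset.card_univ, Fintype.card_prod, Fintype.card_units] at hcount
  calc _ = (cset K α β u c).card * ((Fintype.card E - 1) * Fintype.card E) := by ring
    _ ≤ _ := hcount

open Classical in
lemma weighted_bound (p : ℕ) [Fact p.Prime] [CharP K p] (e r : ℕ) (hr : r = p ^ e)
    (hQ : Fintype.card K = r ^ 2) (hrG : (curveG (Fintype.card E - 1) + 2) ^ 2 < r)
    (α β : E) (hα : α ≠ 0) (φ : E → E → ℂ) (hφ : ∀ u c, ‖φ u c‖ ≤ 1) (hφ0 : ∀ c, φ 0 c = 0)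
    (hsum : ∑ u, ∑ c, φ u c = 0) :
    ‖∑ x : K, φ (Algebra.norm E (x + x⁻¹)) (Algebra.trace E K (α • x + β • x⁻¹))‖ ≤
      (2 * curveG (Fintype.card E - 1) + 1) * r + 3 := by
  set C : ℝ := (2 * curveG (Fintype.card E - 1) + 1 : ℝ) with hC
  have hE1 : 1 < Fintype.card E := Fintype.one_lt_card
  have hN : (0 : ℝ) < Fintype.card E * (Fintype.card E - 1 : ℕ) := by
    have : 0 < Fintype.card E - 1 := by omega
    positivity
  let T : ℝ := (r ^ 2 + C * r) / (Fintype.card E * (Fintype.card E - 1 : ℕ))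
  let I := (Finset.univ.erase (0 : E)) ×ˢ (Finset.univ : Finset E)
  let M : E × E → ℝ := fun t => ((cset K α β t.1 t.2).card : ℝ)
  have hMT : ∀ t ∈ I, M t ≤ T := by
    intro t ht
    have ht1 : t.1 ≠ 0 := by simpa [I] using ht
    rw [le_div_iff₀ hN]
    have := cset_count p e r hr hQ hrG α β t.1 t.2 hα ht1
    have : ((Fintype.card E * (Fintype.card E - 1 : ℕ) : ℕ) : ℝ) * ((cset K α β t.1 t.2).card : ℝ) ≤
      r ^ 2 + (2 * curveG (Fintype.card E - 1) + 1) * r := by exact_mod_cast this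
    push_cast at this
    rw [mul_comm]
    exact this
  have hsum' : ∑ t ∈ I, φ t.1 t.2 = 0 := by
    rw [Finset.sum_product, ← hsum]
    refine Finset.sum_subset (Finset.subset_univ _) ?_
    intro u _ hu
    have : u = 0 := by simpa using hu
    simp [this, hφ0]
  have hIc : ((I.card : ℕ) : ℝ) * T = r ^ 2 + C * r := by
    have : I.card = Fintype.card E * (Fintype.card E - 1) := by
      simp [I, Finset.card_product, mul_comm, Finset.card_univ]
    rw [this]
    push_cast
    exact mul_div_cancel₀ _ hN.ne.symm
  -- the good set
  let g : K → E × E := fun x =>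
    (Algebra.norm E (x + x⁻¹), Algebra.trace E K (α • x + β • x⁻¹))
  let X : Finset K := Finset.univ.filter (fun x => x ≠ 0 ∧ x + x⁻¹ ≠ 0)
  have hgX : ∀ x ∈ X, g x ∈ I := by
    intro x hx
    simp only [X, Finset.mem_filter] at hx
    simp [I, g, hx.2.2]
  have hfib : ∀ t ∈ I, X.filter (fun x => g x = t) = cset K α β t.1 t.2 := by
    intro t ht
    have ht1 : t.1 ≠ 0 := by simpa [I] using ht
    ext x
    simp only [X, cset, Finset.mem_filter, Finset.mem_univ, true_and, g, Prod.ext_iff]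
    constructor
    · rintro ⟨⟨h1, h2⟩, h3, h4⟩
      exact ⟨h1, h3, h4⟩
    · rintro ⟨h1, h2, h3⟩
      refine ⟨⟨h1, ?_⟩, h2, h3⟩
      intro h
      rw [h] at h2
      simp at h2
      exact ht1 h2.symm
  have hsumX : ∑ x : K, φ (g x).1 (g x).2 = ∑ t ∈ I, φ t.1 t.2 * M t := by
    have h1 : ∑ x : K, φ (g x).1 (g x).2 = ∑ x ∈ X, φ (g x).1 (g x).2 := by
      symm
      refine Finset.sum_subset (Finset.subset_univ _) ?_
      intro x _ hx
      have : x + x⁻¹ = 0 := by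
        by_contra h
        apply hx
        simp only [X, Finset.mem_filter, Finset.mem_univ, true_and]
        refine ⟨?_, h⟩
        rintro rfl
        simp at h
      simp [g, this, hφ0]
    rw [h1, ← Finset.sum_fiberwise_of_maps_to hgX]
    refine Finset.sum_congr rfl fun t ht => ?_
    rw [hfib t ht]
    rw [Finset.sum_congr rfl (g := fun _ => φ t.1 t.2)]
    · simp [M, mul_comm]
    · intro x hx
      rw [← hfib t ht] at hx
      rw [(Finset.mem_filter.1 hx).2]
  have hcardX : ∑ t ∈ I, M t = X.card := by
    rw [Finset.card_eq_sum_card_fiberwise hgX]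
    push_cast
    refine Finset.sum_congr rfl fun t ht => ?_
    rw [hfib t ht]
  have hX3 : (r : ℝ) ^ 2 - 3 ≤ X.card := by
    have h1 : Finset.univ.filter (fun x : K => ¬ (x ≠ 0 ∧ x + x⁻¹ ≠ 0)) ⊆
        insert 0 (Polynomial.X ^ 2 + 1 : Polynomial K).roots.toFinset := by
      intro x hx
      simp only [Finset.mem_filter, Finset.mem_univ, true_and] at hx
      simp only [Finset.mem_insert, Multiset.mem_toFinset]
      by_cases h0 : x = 0
      · exact Or.inl h0
      · right
        have h2 : x + x⁻¹ = 0 := by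
          by_contra h
          exact hx ⟨h0, h⟩
        rw [Polynomial.mem_roots (Polynomial.Monic.ne_zero (by monicity!))]
        field_simp at h2
        simpa using h2
    have h2 := Finset.card_le_card h1
    have h3 := Finset.card_insert_le 0 (Polynomial.X ^ 2 + 1 : Polynomial K).roots.toFinset
    have h4 := Multiset.toFinset_card_le (Polynomial.X ^ 2 + 1 : Polynomial K).roots
    have h5 := Polynomial.card_roots' (Polynomial.X ^ 2 + 1 : Polynomial K)
    have h6 : (Polynomial.X ^ 2 + 1 : Polynomial K).natDegree = 2 := by compute_degree!
    have h7 := Finset.card_filter_add_card_filter_not (s := (Finset.univ : Finset K))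
      (fun x : K => (x ≠ 0 ∧ x + x⁻¹ ≠ 0))
    rw [Finset.card_univ, hQ] at h7
    have : r ^ 2 ≤ X.card + 3 := by
      simp only [X]
      omega
    have : (r : ℝ) ^ 2 ≤ X.card + 3 := by exact_mod_cast this
    linarith
  change ‖∑ x : K, φ (g x).1 (g x).2‖ ≤ _
  have h8 : ∑ t ∈ I, φ t.1 t.2 * M t = - ∑ t ∈ I, φ t.1 t.2 * ((T - M t : ℝ) : ℂ) := by
    have : ∑ t ∈ I, φ t.1 t.2 * ((T - M t : ℝ) : ℂ) =
        (∑ t ∈ I, φ t.1 t.2) * T - ∑ t ∈ I, φ t.1 t.2 * M t := by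
      rw [Finset.sum_mul, ← Finset.sum_sub_distrib]
      refine Finset.sum_congr rfl fun t _ => ?_
      push_cast
      ring
    rw [this, hsum']
    ring
  rw [hsumX, h8, norm_neg]
  calc _ ≤ ∑ t ∈ I, ‖φ t.1 t.2 * ((T - M t : ℝ) : ℂ)‖ := norm_sum_le _ _
    _ ≤ ∑ t ∈ I, (T - M t) := by
        refine Finset.sum_le_sum fun t ht => ?_
        have h9 : 0 ≤ T - M t := sub_nonneg.2 (hMT t ht)
        rw [norm_mul, Complex.norm_real, Real.norm_of_nonneg h9]
        calc _ ≤ 1 * (T - M t) := mul_le_mul_of_nonneg_right (hφ _ _) h9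
          _ = _ := one_mul _
    _ = (r ^ 2 + C * r) - X.card := by
        rw [Finset.sum_sub_distrib, Finset.sum_const, nsmul_eq_mul, hIc, hcardX]
    _ ≤ _ := by linarith

lemma mulChar_norm_le (χ : MulChar E ℂ) (u : E) : ‖χ u‖ ≤ 1 := by
  by_cases hu : u = 0
  · simp [hu, MulChar.map_zero]
  · have h : χ u ^ (Fintype.card E - 1) = 1 := by
      rw [← map_pow, FiniteField.pow_card_sub_one_eq_one u hu, map_one]
    have hE1 : 1 < Fintype.card E := Fintype.one_lt_card
    exact (Complex.norm_eq_one_of_pow_eq_one h (by omega)).le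

/-- the character sum over an extension -/
noncomputable def SS (K : Type*) [Field K] [Fintype K] [Algebra E K] (χ : MulChar E ℂ)
    (ψ : AddChar E ℂ) (α β : E) : ℂ :=
  ∑ x : K, χ (Algebra.norm E (x + x⁻¹)) * ψ (Algebra.trace E K (α • x + β • x⁻¹))

lemma SS_bound_aux (p : ℕ) [Fact p.Prime] [CharP K p] (e r : ℕ) (hr : r = p ^ e)
    (hQ : Fintype.card K = r ^ 2) (hrG : (curveG (Fintype.card E - 1) + 2) ^ 2 < r)
    (χ : MulChar E ℂ) (ψ : AddChar E ℂ) (hψ : ψ ≠ 1)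
    (α β : E) (hα : α ≠ 0) :
    ‖SS K χ ψ α β‖ ≤ (2 * curveG (Fintype.card E - 1) + 1) * r + 3 := by
  refine weighted_bound p e r hr hQ hrG α β hα (fun u c => χ u * ψ c) ?_ ?_ ?_
  · intro u c
    rw [norm_mul, AddChar.norm_apply, mul_one]
    exact mulChar_norm_le χ u
  · intro c
    simp [MulChar.map_zero]
  · simp_rw [← Finset.mul_sum, AddChar.sum_eq_zero_of_ne_one hψ]
    simp

theorem SS_bound (p : ℕ) [Fact p.Prime] [CharP K p] (e r : ℕ) (hr : r = p ^ e)
    (hQ : Fintype.card K = r ^ 2) (hrG : (curveG (Fintype.card E - 1) + 2) ^ 2 < r)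
    (χ : MulChar E ℂ) (ψ : AddChar E ℂ) (hψ : ψ ≠ 1)
    (α β : E) (h : χ ≠ 1 ∨ α ≠ 0 ∨ β ≠ 0) :
    ‖SS K χ ψ α β‖ ≤ (2 * curveG (Fintype.card E - 1) + 1) * r + 3 := by
  by_cases hα : α = 0
  · by_cases hβ : β = 0
    · have hχ : χ ≠ 1 := by tauto
      have := weighted_bound (E := E) (K := K) p e r hr hQ hrG 1 0 one_ne_zero
        (fun u c => χ u) ?_ ?_ ?_
      · simpa [SS, hα, hβ] using this
      · intro u c
        exact mulChar_norm_le χ u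
      · intro c
        exact MulChar.map_zero χ
      · simp_rw [Finset.sum_const]
        rw [← Finset.smul_sum, MulChar.sum_eq_zero_of_ne_one hχ, smul_zero]
    · have e1 : SS K χ ψ α β = SS K χ ψ β α := by
        unfold SS
        rw [← Equiv.sum_comp (Equiv.inv K)]
        refine Finset.sum_congr rfl fun x _ => ?_
        simp only [Equiv.inv_apply, inv_inv]
        rw [add_comm x⁻¹ x, add_comm (α • x⁻¹)]
      rw [e1]
      exact SS_bound_aux p e r hr hQ hrG χ ψ hψ β α hβ
  · exact SS_bound_aux p e r hr hQ hrG χ ψ hψ α β hα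

end CountC


section LFun
open Polynomial Finset

variable {E : Type*} [Field E] [Fintype E]

lemma mon_finite (k : ℕ) : {h : E[X] | h.Monic ∧ h.natDegree = k}.Finite := by
  refine Set.Finite.of_injOn (f := fun h : E[X] => fun i : Fin (k + 1) => h.coeff i)
    (t := Set.univ) (fun _ _ => Set.mem_univ _) ?_ Set.finite_univ
  intro f hf g hg h
  ext i
  by_cases hi : i < k + 1
  · exact congrFun h ⟨i, hi⟩
  · rw [coeff_eq_zero_of_natDegree_lt (by rw [hf.2]; omega),
      coeff_eq_zero_of_natDegree_lt (by rw [hg.2]; omega)]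

/-- monic polynomials of degree k -/
noncomputable def Mon (E : Type*) [Field E] [Fintype E] (k : ℕ) : Finset E[X] :=
  (mon_finite (E := E) k).toFinset

lemma mem_Mon {k : ℕ} {h : E[X]} : h ∈ Mon E k ↔ h.Monic ∧ h.natDegree = k := by
  simp [Mon]

open Classical in
/-- monic irreducibles of degree at most k -/
noncomputable def IrrLE (E : Type*) [Field E] [Fintype E] (k : ℕ) : Finset E[X] :=
  ((range (k + 1)).biUnion (Mon E)).filter Irreducible

lemma mem_IrrLE {k : ℕ} {h : E[X]} :
    h ∈ IrrLE E k ↔ h.Monic ∧ h.natDegree ≤ k ∧ Irreducible h := by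
  simp only [IrrLE, mem_filter, mem_biUnion, mem_range, mem_Mon]
  constructor
  · rintro ⟨⟨a, ha, h1, rfl⟩, h2⟩
    exact ⟨h1, by omega, h2⟩
  · rintro ⟨h1, h2, h3⟩
    exact ⟨⟨_, by omega, h1, rfl⟩, h3⟩

open Classical in
lemma deg_formula {k : ℕ} {h : E[X]} (hh : h ∈ Mon E k) :
    k = ∑ P ∈ IrrLE E k, ∑ j ∈ Icc 1 k,
      if P.natDegree ∣ j ∧ P ^ (j / P.natDegree) ∣ h then P.natDegree else 0 := by
  obtain ⟨hm, hk⟩ := mem_Mon.1 hh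
  have h0 : h ≠ 0 := hm.ne_zero
  have key : ∀ P ∈ IrrLE E k, (∑ j ∈ Icc 1 k,
      if P.natDegree ∣ j ∧ P ^ (j / P.natDegree) ∣ h then P.natDegree else 0) =
      (UniqueFactorizationMonoid.normalizedFactors h).count P * P.natDegree := by
    intro P hP
    obtain ⟨hPm, _, hPi⟩ := mem_IrrLE.1 hP
    have hd : 0 < P.natDegree := hPi.natDegree_pos
    have hdvd : ∀ a, P ^ a ∣ h ↔ a ≤ (UniqueFactorizationMonoid.normalizedFactors h).count P := by
      intro a
      have := UniqueFactorizationMonoid.emultiplicity_eq_count_normalizedFactors hPi h0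
      rw [hPm.normalize_eq_self] at this
      rw [pow_dvd_iff_le_emultiplicity, this]
      exact_mod_cast Iff.rfl
    rw [← Finset.sum_filter, Finset.sum_const, smul_eq_mul]
    congr 1
    rw [show (Icc 1 k).filter (fun j => P.natDegree ∣ j ∧ P ^ (j / P.natDegree) ∣ h) =
      (Icc 1 ((UniqueFactorizationMonoid.normalizedFactors h).count P)).image
        (fun a => a * P.natDegree) from ?_]
    · rw [card_image_of_injective]
      · simp
      · intro a b hab
        exact Nat.eq_of_mul_eq_mul_right hd hab
    · ext j
      simp only [mem_filter, mem_Icc, mem_image]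
      constructor
      · rintro ⟨⟨h1, h2⟩, ⟨a, rfl⟩, h3⟩
        rw [Nat.mul_div_cancel_left _ hd, hdvd] at h3
        refine ⟨a, ⟨?_, h3⟩, mul_comm _ _⟩
        by_contra hc
        have : a = 0 := by omega
        simp [this] at h1
      · rintro ⟨a, ⟨h1, h2⟩, rfl⟩
        have h3 := (hdvd a).2 h2
        refine ⟨⟨Nat.mul_pos h1 hd, ?_⟩, dvd_mul_left _ _, ?_⟩
        · have := natDegree_le_of_dvd h3 h0
          rwa [natDegree_pow, hk] at this
        · rwa [Nat.mul_div_cancel _ hd]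
  rw [Finset.sum_congr rfl key]
  have h1 : (UniqueFactorizationMonoid.normalizedFactors h).prod = h := by
    rw [UniqueFactorizationMonoid.prod_normalizedFactors_eq h0, hm.normalize_eq_self]
  have hfac : ∀ P ∈ UniqueFactorizationMonoid.normalizedFactors h, P ∈ IrrLE E k := by
    intro P hP
    have hPi := UniqueFactorizationMonoid.irreducible_of_normalized_factor P hP
    refine mem_IrrLE.2 ⟨?_, ?_, hPi⟩
    · have := UniqueFactorizationMonoid.normalize_normalized_factor P hP
      rw [← this]
      exact monic_normalize hPi.ne_zero
    · rw [← hk]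
      exact natDegree_le_of_dvd (UniqueFactorizationMonoid.dvd_of_mem_normalizedFactors hP) h0
  have h2 : h.natDegree = ((UniqueFactorizationMonoid.normalizedFactors h).map natDegree).sum := by
    conv_lhs => rw [← h1]
    exact natDegree_multiset_prod_of_monic _ fun P hP => (mem_IrrLE.1 (hfac P hP)).1
  rw [Finset.sum_multiset_map_count, hk] at h2
  simp only [smul_eq_mul] at h2
  refine h2.trans ?_
  refine Finset.sum_subset ?_ ?_
  · intro P hP
    exact hfac P (Multiset.mem_toFinset.1 hP)
  · intro P _ hP
    rw [Multiset.mem_toFinset] at hP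
    rw [Multiset.count_eq_zero_of_notMem hP, zero_mul]

/-- coefficients of the L-function -/
noncomputable def Lc (lam : E[X] → ℂ) (k : ℕ) : ℂ := ∑ h ∈ Mon E k, lam h

open Classical in
/-- von Mangoldt sums -/
noncomputable def LL (lam : E[X] → ℂ) (j : ℕ) : ℂ :=
  ∑ P ∈ (IrrLE E j).filter (fun P => P.natDegree ∣ j), P.natDegree * lam P ^ (j / P.natDegree)

lemma lam_pow {E : Type*} [Field E] (lam : E[X] → ℂ) (h1 : lam 1 = 1)
    (hmul : ∀ f g : E[X], f.Monic → g.Monic → lam (f * g) = lam f * lam g) (f : E[X])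
    (hf : f.Monic) (a : ℕ) : lam (f ^ a) = lam f ^ a := by
  induction a with
  | zero => simp [h1]
  | succ a ih => rw [pow_succ, hmul _ _ (hf.pow a) hf, ih, pow_succ]

open Classical in
lemma L_rec (lam : E[X] → ℂ) (h1 : lam 1 = 1)
    (hmul : ∀ f g : E[X], f.Monic → g.Monic → lam (f * g) = lam f * lam g) (k : ℕ) :
    k * Lc lam k = ∑ j ∈ Icc 1 k, LL lam j * Lc lam (k - j) := by
  have e1 : (k : ℂ) * Lc lam k = ∑ h ∈ Mon E k, ∑ P ∈ IrrLE E k, ∑ j ∈ Icc 1 k,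
      if P.natDegree ∣ j ∧ P ^ (j / P.natDegree) ∣ h then P.natDegree * lam h else 0 := by
    rw [Lc, Finset.mul_sum]
    refine Finset.sum_congr rfl fun h hh => ?_
    have := deg_formula hh
    have h2 : (k : ℂ) = ∑ P ∈ IrrLE E k, ∑ j ∈ Icc 1 k,
      if P.natDegree ∣ j ∧ P ^ (j / P.natDegree) ∣ h then (P.natDegree : ℂ) else 0 := by
      conv_lhs => rw [this]
      push_cast
      rfl
    conv_lhs => rw [h2]
    simp only [Finset.sum_mul, ite_mul, zero_mul]
  rw [e1, Finset.sum_comm]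
  simp_rw [Finset.sum_comm (s := Mon E k)]
  rw [Finset.sum_comm]
  refine Finset.sum_congr rfl fun j hj => ?_
  obtain ⟨hj1, hjk⟩ := mem_Icc.1 hj
  have e2 : (IrrLE E j).filter (fun P => P.natDegree ∣ j) =
      (IrrLE E k).filter (fun P => P.natDegree ∣ j) := by
    ext P
    simp only [mem_filter, mem_IrrLE]
    constructor
    · rintro ⟨⟨a, b, c⟩, d⟩
      exact ⟨⟨a, by omega, c⟩, d⟩
    · rintro ⟨⟨a, b, c⟩, d⟩
      exact ⟨⟨a, Nat.le_of_dvd (by omega) d, c⟩, d⟩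
  rw [LL, e2, Finset.sum_mul, Finset.sum_filter]
  refine Finset.sum_congr rfl fun P hP => ?_
  obtain ⟨hPm, _, hPi⟩ := mem_IrrLE.1 hP
  by_cases hd : P.natDegree ∣ j
  · simp only [hd, true_and, if_true]
    rw [← Finset.sum_filter, ← Finset.mul_sum, mul_assoc]
    congr 1
    rw [Lc, Finset.mul_sum]
    symm
    refine Finset.sum_bij (fun g _ => P ^ (j / P.natDegree) * g) ?_ ?_ ?_ ?_
    · intro g hg
      obtain ⟨a, b⟩ := mem_Mon.1 hg
      rw [mem_filter, mem_Mon]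
      refine ⟨⟨(hPm.pow _).mul a, ?_⟩, dvd_mul_right _ _⟩
      rw [(hPm.pow _).natDegree_mul a, natDegree_pow, Nat.div_mul_cancel hd, b]
      omega
    · intro g _ g' _ h
      exact mul_left_cancel₀ (hPm.pow _).ne_zero h
    · intro h hh
      obtain ⟨hh1, g, rfl⟩ := mem_filter.1 hh
      obtain ⟨a, b⟩ := mem_Mon.1 hh1
      have hg : g.Monic := (hPm.pow _).of_mul_monic_left a
      refine ⟨g, mem_Mon.2 ⟨hg, ?_⟩, rfl⟩
      rw [(hPm.pow _).natDegree_mul hg, natDegree_pow, Nat.div_mul_cancel hd] at b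
      omega
    · intro g hg
      rw [hmul _ _ (hPm.pow _) (mem_Mon.1 hg).1, lam_pow lam h1 hmul P hPm]
  · simp [hd]

lemma Lc_zero (lam : E[X] → ℂ) (h1 : lam 1 = 1) : Lc lam 0 = 1 := by
  have : Mon E 0 = {1} := by
    ext h
    rw [mem_Mon, mem_singleton]
    constructor
    · rintro ⟨a, b⟩
      exact a.natDegree_eq_zero.1 b
    · rintro rfl
      exact ⟨monic_one, natDegree_one⟩
  rw [Lc, this, sum_singleton, h1]

theorem L_newton (lam : E[X] → ℂ) (h1 : lam 1 = 1)
    (hmul : ∀ f g : E[X], f.Monic → g.Monic → lam (f * g) = lam f * lam g)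
    (hvan : ∀ k, 5 ≤ k → Lc lam k = 0) :
    ∃ ω : Fin 4 → ℂ, ∀ j, 1 ≤ j → LL lam j = - ∑ i, ω i ^ j := by
  let p : ℂ[X] := X ^ 4 + (C (Lc lam 1) * X ^ 3 + C (Lc lam 2) * X ^ 2 + C (Lc lam 3) * X
    + C (Lc lam 4))
  have hpd : p.natDegree = 4 := by
    simp only [p]
    compute_degree!
  have hpm : p.Monic := by
    simp only [p]
    monicity!
  have hcard : Multiset.card p.roots = 4 := by
    rw [← hpd]
    exact (IsAlgClosed.splits p).natDegree_eq_card_roots.symm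
  obtain ⟨l, hl⟩ := Quot.exists_rep p.roots
  have hl : (l : Multiset ℂ) = p.roots := hl
  have hll : l.length = 4 := by rw [← hcard, ← hl]; rfl
  obtain ⟨ω, hω⟩ : ∃ ω : Fin 4 → ℂ, Multiset.map ω univ.val = p.roots := by
    refine ⟨fun i => l.get (i.cast hll.symm), ?_⟩
    rw [← hl]
    have := Fin.univ_val_map (fun i : Fin 4 => l.get (i.cast hll.symm))
    rw [this]
    congr 1
    subst_vars
    apply List.ext_get
    · simp [hll]
    · intro n h1 h2
      simp only [List.get_ofFn]
      rfl
  refine ⟨ω, ?_⟩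
  have hes : ∀ k, MvPolynomial.aeval ω (MvPolynomial.esymm (Fin 4) ℂ k) = (-1) ^ k * Lc lam k := by
    intro k
    rw [MvPolynomial.aeval_esymm_eq_multiset_esymm, hω]
    by_cases hk : k ≤ 4
    · have := Polynomial.coeff_eq_esymm_roots_of_card (p := p) (by rw [hcard, hpd])
        (k := 4 - k) (by rw [hpd]; omega)
      rw [hpm.leadingCoeff, one_mul, hpd, show 4 - (4 - k) = k by omega] at this
      have h2 : p.coeff (4 - k) = Lc lam k := by
        simp only [p]
        interval_cases k <;> simp [coeff_X, coeff_C, coeff_X_pow, Lc_zero lam h1]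
      rw [← h2, this, ← mul_assoc, ← pow_add, ← two_mul]
      simp
    · rw [hvan k (by omega), mul_zero]
      rw [Multiset.esymm, Multiset.powersetCard_eq_empty]
      · simp
      · rw [hcard]
        omega
  intro k hk
  induction k using Nat.strong_induction_on with
  | _ k ih =>
    have hN := congrArg (MvPolynomial.aeval ω) (MvPolynomial.mul_esymm_eq_sum (Fin 4) ℂ k)
    simp only [map_mul, map_natCast, hes, map_pow, map_neg, map_one, map_sum] at hN
    have hps : ∀ j, MvPolynomial.aeval ω (MvPolynomial.psum (Fin 4) ℂ j) = ∑ i, ω i ^ j := by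
      intro j
      simp [MvPolynomial.psum]
    simp only [hps] at hN
    have hR := L_rec lam h1 hmul k
    have e1 : ∑ a ∈ antidiagonal k with a.1 < k, (-1 : ℂ) ^ a.1 * ((-1) ^ a.1 * Lc lam a.1) *
        ∑ i, ω i ^ a.2 = ∑ j ∈ Icc 1 k, (∑ i, ω i ^ j) * Lc lam (k - j) := by
      refine Finset.sum_bij (fun a _ => a.2) ?_ ?_ ?_ ?_
      · intro a ha
        simp only [mem_filter, HasAntidiagonal.mem_antidiagonal] at ha
        rw [mem_Icc]
        omega
      · rintro ⟨a, a'⟩ ha ⟨b, b'⟩ hb hab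
        simp only [mem_filter, HasAntidiagonal.mem_antidiagonal] at ha hb hab
        ext <;> simp <;> omega
      · intro j hj
        rw [mem_Icc] at hj
        refine ⟨(k - j, j), ?_, rfl⟩
        simp only [mem_filter, HasAntidiagonal.mem_antidiagonal]
        omega
      · intro a ha
        simp only [mem_filter, HasAntidiagonal.mem_antidiagonal] at ha
        rw [show k - a.2 = a.1 by omega, ← mul_assoc, ← pow_add, ← two_mul]
        simp [mul_comm]
    rw [e1] at hN
    have hsq : ((-1 : ℂ) ^ k) * (-1) ^ k = 1 := by
      rw [← pow_add, ← two_mul]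
      simp
    have hN2 : k * Lc lam k = - ∑ j ∈ Icc 1 k, (∑ i, ω i ^ j) * Lc lam (k - j) := by
      have : (-1 : ℂ) ^ k * (k * ((-1) ^ k * Lc lam k)) = (-1 : ℂ) ^ k * ((-1) ^ (k + 1) *
        ∑ j ∈ Icc 1 k, (∑ i, ω i ^ j) * Lc lam (k - j)) := by rw [hN]
      rw [pow_succ] at this
      linear_combination this - (k * Lc lam k) * hsq -
        (∑ j ∈ Icc 1 k, (∑ i, ω i ^ j) * Lc lam (k - j)) * hsq
    have h3 : ∑ j ∈ Icc 1 k, (LL lam j + ∑ i, ω i ^ j) * Lc lam (k - j) = 0 := by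
      simp_rw [add_mul]
      rw [Finset.sum_add_distrib, ← hR, hN2]
      ring
    rw [Finset.sum_eq_single_of_mem k (mem_Icc.2 ⟨hk, le_rfl⟩)] at h3
    · rw [Nat.sub_self, Lc_zero lam h1, mul_one] at h3
      exact eq_neg_of_add_eq_zero_left h3
    · intro j hj hjk
      rw [mem_Icc] at hj
      rw [ih j (by omega) hj.1]
      simp

end LFun


section Lam
open Polynomial Finset

variable {E : Type*} [Field E]

/-- norm of `h` modulo `X^2+1` -/
noncomputable def Rn (h : E[X]) : E :=
  ((h %ₘ (X ^ 2 + 1)).coeff 0) ^ 2 + ((h %ₘ (X ^ 2 + 1)).coeff 1) ^ 2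

lemma Rn_spec {Ω : Type*} [Field Ω] [Algebra E Ω] (ι : Ω) (hι : ι ^ 2 = -1) (h : E[X]) :
    algebraMap E Ω (Rn h) = aeval ι h * aeval (-ι) h := by
  have hm : (X ^ 2 + 1 : E[X]).Monic := by monicity!
  have hd : (h %ₘ (X ^ 2 + 1)).natDegree ≤ 1 := by
    have h2 : (X ^ 2 + 1 : E[X]).natDegree = 2 := by compute_degree!
    have := natDegree_modByMonic_lt h hm (by
      intro h1
      rw [h1, natDegree_one] at h2
      omega)
    omega
  have h1 : aeval ι (X ^ 2 + 1 : E[X]) = 0 := by simp [hι]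
  have h2 : aeval (-ι) (X ^ 2 + 1 : E[X]) = 0 := by simp [hι]
  rw [← aeval_modByMonic_eq_self_of_root h1, ← aeval_modByMonic_eq_self_of_root h2, Rn]
  generalize h %ₘ (X ^ 2 + 1) = r at *
  conv_rhs => rw [eq_X_add_C_of_natDegree_le_one hd]
  simp only [map_add, map_mul, map_pow, aeval_X, aeval_C]
  linear_combination ((algebraMap E Ω (r.coeff 1))^2) * hι

lemma exists_iota (E : Type*) [Field E] : ∃ ι : AlgebraicClosure E, ι ^ 2 = -1 :=
  IsAlgClosed.exists_pow_nat_eq _ (by norm_num)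

lemma Rn_mul (f g : E[X]) : Rn (f * g) = Rn f * Rn g := by
  obtain ⟨ι, hι⟩ := exists_iota E
  apply (algebraMap E (AlgebraicClosure E)).injective
  rw [map_mul, Rn_spec ι hι, Rn_spec ι hι, Rn_spec ι hι, map_mul, map_mul]
  ring

lemma Rn_one : Rn (1 : E[X]) = 1 := by
  obtain ⟨ι, hι⟩ := exists_iota E
  apply (algebraMap E (AlgebraicClosure E)).injective
  rw [Rn_spec ι hι]
  simp

lemma Rn_add (f g : E[X]) : Rn (f + g * (X ^ 2 + 1)) = Rn f := by
  obtain ⟨ι, hι⟩ := exists_iota E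
  apply (algebraMap E (AlgebraicClosure E)).injective
  rw [Rn_spec ι hι, Rn_spec ι hι]
  simp [hι]

/-- logarithmic derivative at zero -/
noncomputable def lgd (h : E[X]) : E := h.coeff 1 / h.coeff 0

lemma lgd_mul (f g : E[X]) (hf : f.coeff 0 ≠ 0) (hg : g.coeff 0 ≠ 0) :
    lgd (f * g) = lgd f + lgd g := by
  unfold lgd
  rw [mul_coeff_zero, mul_coeff_one]
  field_simp
  ring

lemma lgd_prod {ι : Type*} (s : Finset ι) (f : ι → E[X]) (hf : ∀ i ∈ s, (f i).coeff 0 ≠ 0) :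
    lgd (∏ i ∈ s, f i) = ∑ i ∈ s, lgd (f i) := by
  classical
  induction s using Finset.induction_on with
  | empty => simp [lgd, coeff_one]
  | insert a s ha ih =>
    rw [prod_insert ha, sum_insert ha, lgd_mul, ih]
    · exact fun i hi => hf i (mem_insert_of_mem hi)
    · exact hf a (mem_insert_self _ _)
    · rw [coeff_zero_prod]
      exact prod_ne_zero_iff.2 fun i hi => hf i (mem_insert_of_mem hi)

/-- the multiplicative function on monic polynomials -/
noncomputable def lam (χ : MulChar E ℂ) (ψ : AddChar E ℂ) (α β : E) (h : E[X]) : ℂ :=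
  χ (Rn h * ((-1) ^ h.natDegree * h.coeff 0)⁻¹) * ψ (-(α * h.nextCoeff) - β * lgd h)

lemma lam_zero (χ : MulChar E ℂ) (ψ : AddChar E ℂ) (α β : E) (h : E[X]) (h0 : h.coeff 0 = 0) :
    lam χ ψ α β h = 0 := by
  simp [lam, h0, MulChar.map_zero]

lemma lam_one (χ : MulChar E ℂ) (ψ : AddChar E ℂ) (α β : E) : lam χ ψ α β 1 = 1 := by
  simp [lam, Rn_one, lgd, nextCoeff, coeff_one]

lemma lam_mul (χ : MulChar E ℂ) (ψ : AddChar E ℂ) (α β : E) (f g : E[X]) (hf : f.Monic)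
    (hg : g.Monic) : lam χ ψ α β (f * g) = lam χ ψ α β f * lam χ ψ α β g := by
  by_cases hf0 : f.coeff 0 = 0
  · rw [lam_zero _ _ _ _ _ hf0, lam_zero, zero_mul]
    simp [mul_coeff_zero, hf0]
  by_cases hg0 : g.coeff 0 = 0
  · rw [lam_zero _ _ _ _ g hg0, lam_zero, mul_zero]
    simp [mul_coeff_zero, hg0]
  unfold lam
  rw [mul_mul_mul_comm, ← map_mul, ← AddChar.map_add_eq_mul, Rn_mul, hf.natDegree_mul hg,
    mul_coeff_zero, lgd_mul _ _ hf0 hg0, hf.nextCoeff_mul hg]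
  congr 2
  · rw [pow_add]
    simp only [mul_inv]
    ring
  · ring

variable [Fintype E]

lemma Lc_van (l : E[X] → ℂ) (k : ℕ) (T T' : E[X] → E[X]) (hT : ∀ h ∈ Mon E k, T h ∈ Mon E k)
    (hT' : ∀ h ∈ Mon E k, T' h ∈ Mon E k) (h1 : ∀ h ∈ Mon E k, T' (T h) = h)
    (h2 : ∀ h ∈ Mon E k, T (T' h) = h) (w : ℂ) (hw : w ≠ 1)
    (hl : ∀ h ∈ Mon E k, l (T h) = w * l h) : Lc l k = 0 := by
  have e : Lc l k = w * Lc l k := by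
    unfold Lc
    rw [mul_sum]
    symm
    exact sum_nbij' T T' hT hT' h1 h2 fun h hh => (hl h hh).symm
  have : (w - 1) * Lc l k = 0 := by linear_combination -e
  exact (mul_eq_zero.1 this).resolve_left (sub_ne_zero.2 hw)

lemma Mon_add {k : ℕ} {h g : E[X]} (hh : h ∈ Mon E k) (hg : g.degree < k) : h + g ∈ Mon E k := by
  obtain ⟨a, b⟩ := mem_Mon.1 hh
  have hd : h.degree = k := by rw [degree_eq_natDegree a.ne_zero, b]
  rw [← hd] at hg
  refine mem_Mon.2 ⟨a.add_of_left hg, ?_⟩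
  rw [natDegree_add_eq_left_of_degree_lt hg, b]

lemma Lc_lam_van (χ : MulChar E ℂ) (ψ : AddChar E ℂ) (hψ : ψ ≠ 1) (α β : E)
    (hne : χ ≠ 1 ∨ α ≠ 0 ∨ β ≠ 0) (k : ℕ) (hk : 5 ≤ k) : Lc (lam χ ψ α β) k = 0 := by
  obtain ⟨s, hs⟩ := (AddChar.ne_one_iff).1 hψ
  have hnc : ∀ h ∈ Mon E k, h.nextCoeff = h.coeff (k - 1) := by
    intro h hh
    obtain ⟨a, b⟩ := mem_Mon.1 hh
    rw [nextCoeff_of_natDegree_pos (by omega), b]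
  by_cases hα : α = 0
  · by_cases hβ : β = 0
    · have hχ : χ ≠ 1 := by tauto
      obtain ⟨w, hw⟩ := MulChar.ne_one_iff.1 hχ
      have hdeg : ∀ t : E, (C t * (X ^ 2 + 1) : E[X]).degree < k := by
        intro t
        refine lt_of_le_of_lt (b := 2) ?_ (by exact_mod_cast (by omega : 2 < k))
        compute_degree
      have hw0 : (w : E) ≠ 0 := w.ne_zero
      refine Lc_van _ k (fun h => h + C ((w - 1) * h.coeff 0) * (X ^ 2 + 1))
        (fun h => h + C (((w : E)⁻¹ - 1) * h.coeff 0) * (X ^ 2 + 1))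
        (fun h hh => Mon_add hh (hdeg _)) (fun h hh => Mon_add hh (hdeg _)) ?_ ?_ (χ (w : E)⁻¹) ?_ ?_
      · intro h _
        have : (h + C ((w - 1) * h.coeff 0) * (X ^ 2 + 1)).coeff 0 = w * h.coeff 0 := by
          simp [coeff_X]
          ring
        simp only [this]
        rw [add_assoc, ← add_mul, ← C_add, show ((w : E) - 1) * h.coeff 0 +
          ((w : E)⁻¹ - 1) * (w * h.coeff 0) = 0 by field_simp; ring]
        simp
      · intro h _
        have : (h + C (((w : E)⁻¹ - 1) * h.coeff 0) * (X ^ 2 + 1)).coeff 0 = (w : E)⁻¹ * h.coeff 0 := by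
          simp [coeff_X]
          ring
        simp only [this]
        rw [add_assoc, ← add_mul, ← C_add, show ((w : E)⁻¹ - 1) * h.coeff 0 +
          (w - 1) * ((w : E)⁻¹ * h.coeff 0) = 0 by field_simp; ring]
        simp
      · intro h
        apply hw
        have : χ w * χ (w : E)⁻¹ = 1 := by rw [← map_mul, mul_inv_cancel₀ hw0, map_one]
        rwa [h, mul_one] at this
      · intro h hh
        have hc : (h + C ((w - 1) * h.coeff 0) * (X ^ 2 + 1)).coeff 0 = w * h.coeff 0 := by
          simp [coeff_X]
          ring
        have hd := (mem_Mon.1 (Mon_add hh (hdeg ((w - 1) * h.coeff 0)))).2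
        unfold lam
        simp only [hα, hβ, zero_mul, neg_zero, sub_zero, AddChar.map_zero_eq_one, mul_one]
        rw [hd, hc, Rn_add, (mem_Mon.1 hh).2, ← map_mul]
        congr 1
        simp only [mul_inv]
        ring
    · have hdeg : ∀ t : E, (C t * X * (X ^ 2 + 1) : E[X]).degree < k := by
        intro t
        refine lt_of_le_of_lt (b := 3) ?_ (by exact_mod_cast (by omega : 3 < k))
        compute_degree
      have hexp : ∀ t : E, (C t * X * (X ^ 2 + 1) : E[X]) = C t * X ^ 3 + C t * X := by
        intro t
        ring
      have hc0 : ∀ (t : E) (h : E[X]), (h + C t * X * (X ^ 2 + 1)).coeff 0 = h.coeff 0 := by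
        intro t h
        rw [hexp]
        simp
      have hc1 : ∀ (t : E) (h : E[X]), (h + C t * X * (X ^ 2 + 1)).coeff 1 = h.coeff 1 + t := by
        intro t h
        rw [hexp]
        simp [coeff_X_pow]
      have hck : ∀ (t : E) (h : E[X]),
          (h + C t * X * (X ^ 2 + 1)).coeff (k - 1) = h.coeff (k - 1) := by
        intro t h
        rw [hexp]
        simp only [coeff_add, coeff_C_mul, coeff_X_pow, coeff_X]
        rw [if_neg (by omega), if_neg (by omega)]
        simp
      obtain ⟨t, ht⟩ : ∃ t : E, -(β * t) = s := ⟨-(β⁻¹ * s), by field_simp⟩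
      refine Lc_van _ k (fun h => h + C (t * h.coeff 0) * X * (X ^ 2 + 1))
        (fun h => h + C (-t * h.coeff 0) * X * (X ^ 2 + 1))
        (fun h hh => Mon_add hh (hdeg _)) (fun h hh => Mon_add hh (hdeg _)) ?_ ?_ (ψ s) hs ?_
      · intro h _
        simp only [hc0]
        rw [add_assoc, ← add_mul, ← add_mul, ← C_add]
        simp
      · intro h _
        simp only [hc0]
        rw [add_assoc, ← add_mul, ← add_mul, ← C_add]
        simp
      · intro h hh
        by_cases h0 : h.coeff 0 = 0
        · rw [lam_zero _ _ _ _ h h0, lam_zero _ _ _ _ _ (by rw [hc0, h0]), mul_zero]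
        have hM := Mon_add hh (hdeg (t * h.coeff 0))
        unfold lam lgd
        rw [hnc _ hM, hnc _ hh, hck, hc0, hc1, Rn_add, (mem_Mon.1 hh).2, (mem_Mon.1 hM).2,
          mul_left_comm, ← AddChar.map_add_eq_mul, ← ht]
        congr 2
        field_simp
        ring
  · obtain ⟨l, rfl⟩ : ∃ l, k = l + 5 := ⟨k - 5, by omega⟩
    have hexp : ∀ t : E, (C t * X ^ (l + 2) * (X ^ 2 + 1) : E[X]) =
        C t * X ^ (l + 4) + C t * X ^ (l + 2) := by
      intro t
      ring
    have hdeg : ∀ t : E, (C t * X ^ (l + 2) * (X ^ 2 + 1) : E[X]).degree < (l + 5 : ℕ) := by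
      intro t
      refine lt_of_le_of_lt (b := ((l + 4 : ℕ) : WithBot ℕ)) ?_
        (by exact_mod_cast (by omega : l + 4 < l + 5))
      rw [hexp]
      refine (degree_add_le _ _).trans (max_le (degree_C_mul_X_pow_le _ _)
        ((degree_C_mul_X_pow_le _ _).trans ?_))
      exact WithBot.coe_le_coe.2 (by omega : l + 2 ≤ l + 4)
    have hc0 : ∀ (t : E) (h : E[X]), (h + C t * X ^ (l + 2) * (X ^ 2 + 1)).coeff 0 = h.coeff 0 := by
      intro t h
      rw [hexp]
      simp
    have hc1 : ∀ (t : E) (h : E[X]), (h + C t * X ^ (l + 2) * (X ^ 2 + 1)).coeff 1 = h.coeff 1 := by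
      intro t h
      rw [hexp]
      simp [coeff_X_pow]
    have hck : ∀ (t : E) (h : E[X]),
        (h + C t * X ^ (l + 2) * (X ^ 2 + 1)).coeff (l + 5 - 1) = h.coeff (l + 5 - 1) + t := by
      intro t h
      rw [hexp]
      simp [coeff_X_pow]
    obtain ⟨t, ht⟩ : ∃ t : E, -(α * t) = s := ⟨-(α⁻¹ * s), by field_simp⟩
    refine Lc_van _ (l + 5) (fun h => h + C t * X ^ (l + 2) * (X ^ 2 + 1))
      (fun h => h + C (-t) * X ^ (l + 2) * (X ^ 2 + 1))
      (fun h hh => Mon_add hh (hdeg _)) (fun h hh => Mon_add hh (hdeg _)) ?_ ?_ (ψ s) hs ?_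
    · intro h _
      simp
    · intro h _
      simp
    · intro h hh
      have hM := Mon_add hh (hdeg t)
      unfold lam lgd
      rw [hnc _ hM, hnc _ hh, hck, hc0, hc1, Rn_add, (mem_Mon.1 hh).2, (mem_Mon.1 hM).2,
        mul_left_comm, ← AddChar.map_add_eq_mul, ← ht]
      congr 2
      ring

end Lam


section SSLL
open Polynomial Finset IntermediateField

lemma minpoly_pow_map {E K Ω : Type*} [Field E] [Field K] [Algebra E K] [FiniteDimensional E K]
    [Algebra.IsSeparable E K] [Field Ω] [Algebra E Ω] [IsAlgClosed Ω] (x : K) :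
    ((minpoly E x) ^ (Module.finrank E K / (minpoly E x).natDegree)).map (algebraMap E Ω) =
      ∏ σ : K →ₐ[E] Ω, (X - C (σ x)) := by
  classical
  have hx := Algebra.IsSeparable.isIntegral E x
  have hd : Module.finrank E K / (minpoly E x).natDegree = Module.finrank E⟮x⟯ K := by
    rw [← adjoin.finrank hx, ← Module.finrank_mul_finrank E E⟮x⟯ K, Nat.mul_div_cancel_left]
    exact Module.finrank_pos
  rw [hd, Polynomial.map_pow]
  let pb := adjoin.powerBasis hx
  have hg : pb.gen = AdjoinSimple.gen E x := adjoin.powerBasis_gen hx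
  have hmin : minpoly E pb.gen = minpoly E x := by
    rw [hg]; exact minpoly_gen E x
  let : Fintype (E⟮x⟯ →ₐ[E] Ω) := PowerBasis.AlgHom.fintype pb
  have h1 : (minpoly E x).map (algebraMap E Ω) = ∏ σ : E⟮x⟯ →ₐ[E] Ω, (X - C (σ pb.gen)) := by
    have hs := (IsAlgClosed.splits ((minpoly E x).map (algebraMap E Ω)))
    rw [hs.eq_prod_roots_of_monic ((minpoly.monic hx).map _)]
    rw [@Fintype.prod_equiv (E⟮x⟯ →ₐ[E] Ω) _ _ (PowerBasis.AlgHom.fintype pb) _ _ pb.liftEquiv'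
      (fun σ => X - C (σ pb.gen)) (fun x => X - C (x : Ω)) ?_]
    · rw [Finset.prod_mem_multiset (f := fun x => X - C (x : Ω)) (g := fun x => X - C (x : Ω)),
        Finset.prod_eq_multiset_prod, Multiset.toFinset_val,
        Multiset.dedup_eq_self.mpr, aroots_def, hmin]
      · exact nodup_roots (.map (by rw [hmin]; exact Algebra.IsSeparable.isSeparable E x))
      · intro x; rfl
    · intro σ; simp only [PowerBasis.liftEquiv'_apply_coe]
  rw [h1]
  have : Algebra.IsSeparable E⟮x⟯ K := Algebra.isSeparable_tower_top_of_isSeparable E E⟮x⟯ K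
  symm
  rw [Fintype.prod_equiv algHomEquivSigma (fun σ : K →ₐ[E] Ω => (X - C (σ x)))
    (fun σ : (Σ f : E⟮x⟯ →ₐ[E] Ω, @AlgHom E⟮x⟯ K Ω _ _ _ _ f.toRingHom.toAlgebra) => (X - C (σ.1 pb.gen))),
    ← Finset.univ_sigma_univ, Finset.prod_sigma, ← Finset.prod_pow]
  · refine Finset.prod_congr rfl fun σ _ => ?_
    let : Algebra E⟮x⟯ Ω := σ.toRingHom.toAlgebra
    simp_rw [Finset.prod_const]
    congr
    exact AlgHom.card E⟮x⟯ K Ω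
  · intro σ
    rw [hg]
    simp only [algHomEquivSigma, Equiv.coe_fn_mk, AlgHom.domRestrict, AlgHom.comp_apply,
      IsScalarTower.coe_toAlgHom']
    rw [AdjoinSimple.algebraMap_gen]

variable {E K : Type*} [Field E] [Fintype E] [Field K] [Fintype K] [Algebra E K]

lemma lam_minpoly (χ : MulChar E ℂ) (ψ : AddChar E ℂ) (α β : E) (x : K) :
    χ (Algebra.norm E (x + x⁻¹)) * ψ (Algebra.trace E K (α • x + β • x⁻¹)) =
      lam χ ψ α β (minpoly E x) ^ (Module.finrank E K / (minpoly E x).natDegree) := by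
  have hx := Algebra.IsSeparable.isIntegral E x
  have hmon := minpoly.monic hx
  by_cases h0 : x = 0
  · subst h0
    have : Module.finrank E K ≠ 0 := Module.finrank_pos.ne'
    rw [minpoly.zero, lam_zero _ _ _ _ _ (by simp), natDegree_X, Nat.div_one, zero_pow this]
    simp [Algebra.norm_zero, MulChar.map_zero]
  rw [← lam_pow (lam χ ψ α β) (lam_one _ _ _ _) (lam_mul _ _ _ _) _ hmon]
  set h := (minpoly E x) ^ (Module.finrank E K / (minpoly E x).natDegree) with hh
  let Ω := AlgebraicClosure E
  have hmap : h.map (algebraMap E Ω) = ∏ σ : K →ₐ[E] Ω, (X - C (σ x)) := minpoly_pow_map x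
  have hcard : Fintype.card (K →ₐ[E] Ω) = Module.finrank E K := AlgHom.card E K Ω
  have hinj := (algebraMap E Ω).injective
  obtain ⟨ι, hι⟩ := exists_iota E
  have hσ : ∀ σ : K →ₐ[E] Ω, σ x ≠ 0 := fun σ => by simpa using h0
  have hdeg : h.natDegree = Fintype.card (K →ₐ[E] Ω) := by
    rw [← natDegree_map (algebraMap E Ω), hmap, natDegree_prod_of_monic _ _ fun σ _ => monic_X_sub_C _]
    simp
  have hc0 : (-1) ^ h.natDegree * h.coeff 0 = Algebra.norm E x := by
    apply hinj
    rw [Algebra.norm_eq_prod_embeddings, map_mul, ← coeff_map, hmap, coeff_zero_prod, hdeg]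
    simp only [coeff_sub, coeff_X_zero, coeff_C_zero, zero_sub, prod_neg, map_pow, map_neg, map_one]
    rw [← mul_assoc, ← pow_add, card_univ, ← two_mul, pow_mul]
    simp
  have hR : Rn h = Algebra.norm E (x ^ 2 + 1) := by
    apply hinj
    rw [Rn_spec ι hι, Algebra.norm_eq_prod_embeddings, ← eval_map_algebraMap,
      ← eval_map_algebraMap, hmap, eval_prod, eval_prod, ← prod_mul_distrib]
    refine prod_congr rfl fun σ _ => ?_
    simp only [eval_sub, eval_X, eval_C, map_add, map_pow, map_one]
    linear_combination -hι
  have hn : -h.nextCoeff = Algebra.trace E K x := by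
    apply hinj
    rw [trace_eq_sum_embeddings, map_neg, ← nextCoeff_map hinj, hmap,
      Monic.nextCoeff_prod _ _ fun σ _ => monic_X_sub_C _, ← sum_neg_distrib]
    refine sum_congr rfl fun σ _ => ?_
    rw [nextCoeff_X_sub_C, neg_neg]
  have hl : -lgd h = Algebra.trace E K x⁻¹ := by
    apply hinj
    have : algebraMap E Ω (lgd h) = lgd (h.map (algebraMap E Ω)) := by
      simp [lgd]
    rw [trace_eq_sum_embeddings, map_neg, this, hmap, lgd_prod, ← sum_neg_distrib]
    · refine sum_congr rfl fun σ _ => ?_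
      have := hσ σ
      simp [lgd, coeff_C]
    · intro σ _
      simpa using h0
  have hxx : x + x⁻¹ = (x ^ 2 + 1) * x⁻¹ := by field_simp
  unfold lam
  rw [hc0, hR, hxx, map_mul (Algebra.norm E), Algebra.norm_inv, map_add (Algebra.trace E K), map_smul, map_smul, ← hn, ← hl,
    smul_eq_mul, smul_eq_mul]
  congr 2
  ring

lemma SS_eq_LL (χ : MulChar E ℂ) (ψ : AddChar E ℂ) (α β : E) :
    SS K χ ψ α β = LL (lam χ ψ α β) (Module.finrank E K) := by
  classical
  set m := Module.finrank E K with hm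
  have hm0 : 0 < m := Module.finrank_pos
  unfold SS LL
  have hmem : ∀ x ∈ (univ : Finset K), minpoly E x ∈ (IrrLE E m).filter (·.natDegree ∣ m) := by
    intro x _
    have hx := Algebra.IsSeparable.isIntegral E x
    have hdv := minpoly.degree_dvd (K := E) hx
    rw [mem_filter, mem_IrrLE]
    exact ⟨⟨minpoly.monic hx, Nat.le_of_dvd hm0 hdv, minpoly.irreducible hx⟩, hdv⟩
  rw [← sum_fiberwise_of_maps_to hmem]
  refine sum_congr (by congr) fun P hP => ?_
  rw [mem_filter, mem_IrrLE] at hP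
  obtain ⟨⟨hmon, -, hirr⟩, hdv⟩ := hP
  have : ∀ x ∈ (univ : Finset K).filter (fun x => minpoly E x = P),
      χ (Algebra.norm E (x + x⁻¹)) * ψ (Algebra.trace E K (α • x + β • x⁻¹)) =
      lam χ ψ α β P ^ (m / P.natDegree) := by
    intro x hx
    rw [lam_minpoly, (mem_filter.1 hx).2]
  rw [sum_congr rfl this, sum_const, nsmul_eq_mul]
  congr 2
  have hN : Fintype.card K = Nat.card E ^ m := by
    rw [Nat.card_eq_fintype_card]; exact Module.card_eq_pow_finrank
  have h1 : P ∣ X ^ (Fintype.card K) - X := by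
    rw [hN]
    exact hirr.natDegree_dvd_iff_dvd_X_pow_card_pow_sub_X.1 hdv
  have h2 : (X ^ (Fintype.card K) - X : K[X]).Splits := by
    rw [← Nat.card_eq_fintype_card]
    exact Polynomial.splits_X_pow_nat_card_sub_X
  have hne : (X ^ (Fintype.card K) - X : K[X]) ≠ 0 := FiniteField.X_pow_card_sub_X_ne_zero K Fintype.one_lt_card
  have h1' : P.map (algebraMap E K) ∣ X ^ (Fintype.card K) - X := by
    have := Polynomial.map_dvd (algebraMap E K) h1
    simpa using this
  have h3 : (P.map (algebraMap E K)).Splits := h2.of_dvd hne h1'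
  have h4 : (P.map (algebraMap E K)).roots.card = P.natDegree := by
    rw [← h3.natDegree_eq_card_roots, natDegree_map]
  have h5 : (P.map (algebraMap E K)).roots.Nodup :=
    nodup_roots (Separable.map (PerfectField.separable_of_irreducible hirr))
  rw [← h4, ← Multiset.toFinset_card_of_nodup h5]
  congr 1
  ext x
  have hx := Algebra.IsSeparable.isIntegral E x
  simp only [mem_filter, mem_univ, true_and, Multiset.mem_toFinset]
  rw [mem_roots_map hmon.ne_zero]
  constructor
  · rintro rfl
    exact minpoly.aeval E x
  · intro h
    exact (minpoly.eq_of_irreducible_of_monic hirr h hmon).symm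

end SSLL


section OmegaBound
open Polynomial Finset

lemma rho_bound (ρ : Fin 4 → ℂ) (B : ℝ) (k0 : ℕ) (h : ∀ k, k0 ≤ k → ‖∑ i, ρ i ^ k‖ ≤ B) (i0 : Fin 4) :
    ‖ρ i0‖ ≤ 1 := by
  classical
  by_contra! hlt
  set S := (univ.image ρ).erase (ρ i0)
  set P : ℂ[X] := ∏ s ∈ S, (X - C s) with hP
  have hP0 : P.eval (ρ i0) ≠ 0 := by
    rw [hP, eval_prod]
    refine prod_ne_zero_iff.2 fun s hs => ?_
    rw [mem_erase] at hs
    simpa [sub_ne_zero] using hs.1.symm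
  have hPi : ∀ i, ρ i ≠ ρ i0 → P.eval (ρ i) = 0 := by
    intro i hi
    rw [hP, eval_prod]
    exact prod_eq_zero (i := ρ i) (mem_erase.2 ⟨hi, mem_image_of_mem _ (mem_univ _)⟩) (by simp)
  set M := (univ.filter fun i => ρ i = ρ i0).card
  have hM : 1 ≤ M := card_pos.2 ⟨i0, by simp⟩
  have key : ∀ k, ∑ j ∈ range (P.natDegree + 1), P.coeff j * ∑ i, ρ i ^ (k + j) =
      M * (P.eval (ρ i0) * ρ i0 ^ k) := by
    intro k
    simp_rw [mul_sum]
    rw [sum_comm]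
    have : ∀ i, ∑ j ∈ range (P.natDegree + 1), P.coeff j * ρ i ^ (k + j) =
        if ρ i = ρ i0 then P.eval (ρ i0) * ρ i0 ^ k else 0 := by
      intro i
      have e : ∑ j ∈ range (P.natDegree + 1), P.coeff j * ρ i ^ (k + j) =
          P.eval (ρ i) * ρ i ^ k := by
        rw [eval_eq_sum_range, sum_mul]
        refine sum_congr rfl fun j _ => ?_
        rw [pow_add]; ring
      rw [e]
      split_ifs with hi
      · rw [hi]
      · rw [hPi i hi, zero_mul]
    rw [sum_congr rfl fun i _ => this i, ← sum_filter, sum_const, nsmul_eq_mul]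
  set B' := ∑ j ∈ range (P.natDegree + 1), ‖P.coeff j‖ * B
  have hb : ∀ k, k0 ≤ k → ‖P.eval (ρ i0)‖ * ‖ρ i0‖ ^ k ≤ B' := by
    intro k hk
    have h1 : ‖(M : ℂ) * (P.eval (ρ i0) * ρ i0 ^ k)‖ ≤ B' := by
      rw [← key]
      refine (norm_sum_le _ _).trans (sum_le_sum fun j _ => ?_)
      rw [norm_mul]
      exact mul_le_mul_of_nonneg_left (h _ (by omega)) (norm_nonneg _)
    rw [norm_mul, norm_mul, norm_pow, Complex.norm_natCast] at h1
    refine le_trans ?_ h1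
    refine le_mul_of_one_le_left (by positivity) (by exact_mod_cast hM)
  have hpos : 0 < ‖P.eval (ρ i0)‖ := norm_pos_iff.2 hP0
  obtain ⟨k, hk⟩ := pow_unbounded_of_one_lt (B' / ‖P.eval (ρ i0)‖) hlt
  have h2 := hb (max k k0) (le_max_right _ _)
  have h3 : ‖ρ i0‖ ^ k ≤ ‖ρ i0‖ ^ (max k k0) := pow_le_pow_right₀ hlt.le (le_max_left _ _)
  rw [div_lt_iff₀ hpos] at hk
  nlinarith

lemma SS_weil {E : Type*} [Field E] [Fintype E] (χ : MulChar E ℂ) (ψ : AddChar E ℂ) (hψ : ψ ≠ 1)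
    (α β : E) (hne : χ ≠ 1 ∨ α ≠ 0 ∨ β ≠ 0) :
    ‖∑ x : E, χ (x + x⁻¹) * ψ (α * x + β * x⁻¹)‖ ≤ 4 * Real.sqrt (Fintype.card E) := by
  classical
  set N := Fintype.card E with hN
  have hN1 : 1 < N := Fintype.one_lt_card
  obtain ⟨ω, hω⟩ := L_newton (lam χ ψ α β) (lam_one _ _ _ _) (lam_mul _ _ _ _)
    (Lc_lam_van χ ψ hψ α β hne)
  obtain ⟨p, hp⟩ := CharP.exists E
  haveI : Fact p.Prime := ⟨CharP.char_is_prime E p⟩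
  obtain ⟨e, -, he⟩ := FiniteField.card E p
  set G := curveG (N - 1)
  have hbd : ∀ k, (G + 2) ^ 2 ≤ k → ‖∑ i, (ω i ^ 2 / N) ^ k‖ ≤ 2 * G + 4 := by
    intro k hk
    have hk0 : 0 < k := lt_of_lt_of_le (by positivity) hk
    haveI : NeZero (2 * k) := ⟨by omega⟩
    let K := FiniteField.Extension E p (2 * k)
    letI : Fintype K := Fintype.ofFinite K
    haveI : CharP K p := charP_of_injective_algebraMap (algebraMap E K).injective p
    have hfr : Module.finrank E K = 2 * k := FiniteField.finrank_extension E p (2 * k)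
    have hcard : Fintype.card K = (N ^ k) ^ 2 := by
      rw [Module.card_eq_pow_finrank (K := E), hfr, ← pow_mul, mul_comm 2 k]
    have hlt : (G + 2) ^ 2 < N ^ k := lt_of_le_of_lt hk (Nat.lt_pow_self hN1)
    have hb := SS_bound (K := K) p (e * k) (N ^ k) (by rw [hN, he, pow_mul]) hcard hlt χ ψ hψ α β hne
    rw [SS_eq_LL, hfr, hω _ (by omega), norm_neg] at hb
    have hNk : (1 : ℝ) ≤ (N : ℝ) ^ k := one_le_pow₀ (by exact_mod_cast hN1.le)
    have e1 : ∑ i, (ω i ^ 2 / N) ^ k = (∑ i, ω i ^ (2 * k)) / (N : ℂ) ^ k := by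
      rw [sum_div]
      refine sum_congr rfl fun i _ => ?_
      rw [div_pow, pow_mul]
    rw [e1, norm_div, norm_pow, Complex.norm_natCast, div_le_iff₀ (by linarith)]
    push_cast at hb
    nlinarith
  have hω1 : ∀ i, ‖ω i‖ ≤ Real.sqrt N := by
    intro i
    have := rho_bound _ _ _ hbd i
    rw [norm_div, norm_pow, Complex.norm_natCast, div_le_one (by positivity)] at this
    exact Real.le_sqrt_of_sq_le this
  have hS : ∑ x : E, χ (x + x⁻¹) * ψ (α * x + β * x⁻¹) = SS E χ ψ α β := by
    unfold SS
    refine sum_congr rfl fun x _ => ?_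
    rw [Algebra.norm_self, Algebra.trace_self]
    simp
  rw [hS, SS_eq_LL, Module.finrank_self, hω 1 le_rfl, norm_neg]
  refine (norm_sum_le _ _).trans ?_
  refine (sum_le_sum (g := fun _ => Real.sqrt N) fun i _ => by simpa using hω1 i).trans ?_
  simp
end OmegaBound


section Numeric
open Finset

lemma omega_bound (M : ℕ) (hM : M ≠ 0) : 16 ^ M.primeFactors.card * 30030 ≤ 16 ^ 6 * M := by
  set S := M.primeFactors
  set A : Finset ℕ := {2, 3, 5, 7, 11, 13} with hA
  have h1 : ∏ l ∈ S, l ≤ M := Nat.le_of_dvd (Nat.pos_of_ne_zero hM) (Nat.prod_primeFactors_dvd M)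
  have h2 : 16 ^ (S \ A).card ≤ ∏ l ∈ S \ A, l := by
    apply pow_card_le_prod
    intro l hl
    rw [mem_sdiff] at hl
    have hp := Nat.prime_of_mem_primeFactors hl.1
    have hn := hl.2
    by_contra! hlt
    rw [hA] at hn
    clear_value S
    clear hl h1
    have key : ∀ l < 16, Nat.Prime l → l ∉ ({2, 3, 5, 7, 11, 13} : Finset ℕ) → False := by decide
    exact key l hlt hp hn
  have h3 : ∏ l ∈ A \ S, l ≤ 16 ^ (A \ S).card := by
    apply prod_le_pow_card
    intro l hl
    have := (mem_sdiff.1 hl).1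
    rw [hA] at this
    simp only [mem_insert, mem_singleton] at this
    omega
  have h4 : ∏ l ∈ A, l = 30030 := by decide
  have h5 : A.card = 6 := by decide
  have e1 : S.card = (S ∩ A).card + (S \ A).card := (card_inter_add_card_sdiff S A).symm
  have e2 : A.card = (S ∩ A).card + (A \ S).card := by
    rw [inter_comm]; exact (card_inter_add_card_sdiff A S).symm
  have e3 : ∏ l ∈ S, l = (∏ l ∈ S ∩ A, l) * ∏ l ∈ S \ A, l := (prod_inter_mul_prod_diff S A _).symm
  have e4 : ∏ l ∈ A, l = (∏ l ∈ S ∩ A, l) * ∏ l ∈ A \ S, l := by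
    rw [inter_comm]; exact (prod_inter_mul_prod_diff A S _).symm
  calc 16 ^ S.card * 30030
      = 16 ^ (S ∩ A).card * (∏ l ∈ S ∩ A, l) * (16 ^ (S \ A).card * ∏ l ∈ A \ S, l) := by
        rw [← h4, e4, e1, pow_add]; ring
    _ ≤ 16 ^ (S ∩ A).card * (∏ l ∈ S ∩ A, l) * ((∏ l ∈ S \ A, l) * 16 ^ (A \ S).card) := by
        gcongr
    _ = 16 ^ 6 * ∏ l ∈ S, l := by
        rw [← h5, e2, e3, pow_add]; ring
    _ ≤ 16 ^ 6 * M := by gcongr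

lemma W_bound (q n : ℕ) (hq : 2 ≤ q) (hn : 25 ≤ n) :
    4 * (2 ^ (q ^ n - 1).primeFactors.card : ℝ) * q ^ 2 ≤ Real.sqrt ((q ^ n : ℕ) : ℝ) := by
  apply Real.le_sqrt_of_sq_le
  set w := (q ^ n - 1).primeFactors.card
  have hqn : 1 < q ^ n := Nat.one_lt_pow (by omega) (by omega)
  have hw : 256 * 16 ^ w ≤ q ^ (n - 8) * q ^ n := by
    rcases Nat.lt_or_ge 2 q with h | h
    · have h1 := omega_bound (q ^ n - 1) (by omega)
      have h2 : 3 ^ 17 ≤ q ^ (n - 8) :=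
        (Nat.pow_le_pow_left h 17).trans (Nat.pow_le_pow_right (by omega) (by omega))
      have h3 : 3 ^ 17 * q ^ n ≤ q ^ (n - 8) * q ^ n := Nat.mul_le_mul_right _ h2
      norm_num at h1 h3
      change 16 ^ w * 30030 ≤ _ at h1
      omega
    · obtain rfl : q = 2 := by omega
      have hodd : ¬ 2 ∣ 2 ^ n - 1 := by
        have : 2 ∣ 2 ^ n := dvd_pow_self 2 (by omega)
        omega
      have hcop : Nat.Coprime 2 (2 ^ n - 1) := (Nat.Prime.coprime_iff_not_dvd Nat.prime_two).2 hodd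
      have h1 := omega_bound (2 * (2 ^ n - 1)) (by omega)
      rw [hcop.primeFactors_mul, card_union_of_disjoint hcop.disjoint_primeFactors,
        Nat.Prime.primeFactors Nat.prime_two, card_singleton, pow_add] at h1
      have h2 : 2 ^ 17 ≤ 2 ^ (n - 8) := Nat.pow_le_pow_right (by omega) (by omega)
      have h3 : 2 ^ 17 * 2 ^ n ≤ 2 ^ (n - 8) * 2 ^ n := Nat.mul_le_mul_right _ h2
      change 16 ^ 1 * 16 ^ w * 30030 ≤ _ at h1
      generalize 2 ^ (n - 8) * 2 ^ n = Z at *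
      generalize 2 ^ n = Y at *
      generalize 16 ^ w = V at *
      omega
  have h4 : (16 * (2 ^ w) ^ 2 * q ^ 4) ^ 2 ≤ (q ^ n) ^ 2 := by
    have e1 : ((2 : ℕ) ^ w) ^ 4 = 16 ^ w := by rw [← pow_mul, mul_comm, pow_mul]; norm_num
    calc (16 * (2 ^ w) ^ 2 * q ^ 4) ^ 2 = 256 * (2 ^ w) ^ 4 * q ^ 8 := by ring
      _ ≤ q ^ (n - 8) * q ^ n * q ^ 8 := by rw [e1]; gcongr
      _ = (q ^ (n - 8) * q ^ 8) * q ^ n := by ring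
      _ = (q ^ n) ^ 2 := by rw [← pow_add, Nat.sub_add_cancel (by omega)]; ring
  have h5 := (Nat.pow_le_pow_iff_left (by norm_num)).1 h4
  have h6 : (16 * (2 ^ w) ^ 2 * (q : ℝ) ^ 4) ≤ ((q ^ n : ℕ) : ℝ) := by exact_mod_cast h5
  calc _ = (16 * (2 ^ w) ^ 2 * (q : ℝ) ^ 4) := by ring
    _ ≤ _ := h6
end Numeric



section Final
open Finset

lemma main_est {J : Type*} [DecidableEq J] (S : Finset J) (j0 : J) (hj : j0 ∈ S) (c s : J → ℂ) (B : ℝ)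
    (h0 : ∑ j ∈ S, c j * s j = 0) (hB : ∀ j ∈ S, j ≠ j0 → ‖s j‖ ≤ B) :
    ‖c j0‖ * ‖s j0‖ ≤ (∑ j ∈ S, ‖c j‖ - ‖c j0‖) * B := by
  rw [← add_sum_erase S _ hj] at h0 ⊢
  have h1 : c j0 * s j0 = - ∑ j ∈ S.erase j0, c j * s j := by linear_combination h0
  rw [← norm_mul, h1, norm_neg, add_sub_cancel_left, sum_mul]
  refine (norm_sum_le _ _).trans (sum_le_sum fun j hj => ?_)
  rw [norm_mul]
  exact mul_le_mul_of_nonneg_left (hB j (mem_of_mem_erase hj) (ne_of_mem_erase hj)) (norm_nonneg _)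

/-- the coefficients of the sieve -/
noncomputable def sco (l i : ℕ) : ℝ := if i = 0 then 1 - 1 / l else - (1 / l)

lemma sco_abs (l : ℕ) (hl : 2 ≤ l) : ∑ i ∈ range l, |sco l i| = 2 * (1 - 1 / l) := by
  obtain ⟨k, rfl⟩ : ∃ k, l = k + 1 := ⟨l - 1, by omega⟩
  rw [sum_range_succ']
  have h1 : (1 : ℝ) / ((k + 1 : ℕ) : ℝ) ≤ 1 := by
    rw [div_le_one (by positivity)]
    exact_mod_cast (by omega : 1 ≤ k + 1)
  have h2 : (0 : ℝ) ≤ 1 / ((k + 1 : ℕ) : ℝ) := by positivity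
  simp only [sco, Nat.succ_ne_zero, if_false, if_true, abs_neg, abs_of_nonneg h2,
    abs_of_nonneg (sub_nonneg.2 h1), sum_const, card_range, nsmul_eq_mul]
  push_cast
  field_simp
  ring

variable {E : Type*} [Field E] [Fintype E]

lemma sieve (E : Type*) [Field E] [Fintype E] : ∃ (J : Type) (_ : DecidableEq J) (S : Finset J) (j0 : J)
    (c : J → ℂ) (χ : J → MulChar E ℂ), j0 ∈ S ∧ c j0 ≠ 0 ∧ χ j0 = 1 ∧
      (∀ j ∈ S, j ≠ j0 → χ j ≠ 1) ∧
      ∑ j ∈ S, ‖c j‖ = 2 ^ (Fintype.card E - 1).primeFactors.card * ‖c j0‖ ∧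
      ∀ γ : E, ∑ j ∈ S, c j * χ j γ ≠ 0 → orderOf γ = Fintype.card E - 1 := by
  classical
  set M := Fintype.card E - 1 with hM
  have hM0 : 0 < M := by have := Fintype.one_lt_card (α := E); omega
  have hex : ∀ l : M.primeFactors, ∃ χ : MulChar E ℂ, orderOf χ = l := by
    intro l
    have hl := Nat.prime_of_mem_primeFactors l.2
    exact MulChar.exists_mulChar_orderOf E (Nat.dvd_of_mem_primeFactors l.2)
      (Complex.isPrimitiveRoot_exp l hl.ne_zero)
  choose ch hch using hex
  have hpr : ∀ l : M.primeFactors, Nat.Prime l := fun l => Nat.prime_of_mem_primeFactors l.2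
  have habs : ∀ l : M.primeFactors, |sco l 0| = 1 - 1 / (l : ℕ) := by
    intro l
    rw [sco, if_pos rfl, abs_of_nonneg]
    rw [sub_nonneg, div_le_one (by exact_mod_cast (hpr l).pos)]
    exact_mod_cast (hpr l).one_lt.le
  refine ⟨M.primeFactors → ℕ, inferInstance, Fintype.piFinset fun l => range l, 0,
    fun x => ((∏ l : M.primeFactors, sco l (x l) : ℝ) : ℂ), fun x => ∏ l, ch l ^ x l, ?_, ?_, ?_, ?_, ?_, ?_⟩
  · rw [Fintype.mem_piFinset]
    intro l
    simpa using (hpr l).pos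
  · simp only [Pi.zero_apply]
    rw [Complex.ofReal_ne_zero]
    refine prod_ne_zero_iff.2 fun l _ => ?_
    rw [← abs_ne_zero, habs]
    have : (1 : ℝ) < (l : ℕ) := by exact_mod_cast (hpr l).one_lt
    have : (1 : ℝ) / (l : ℕ) < 1 := by rw [div_lt_one (by linarith)]; exact this
    linarith
  · simp
  · intro x hx hne h1
    apply hne
    funext l
    have hxl : x l < l := by simpa using (Fintype.mem_piFinset.1 hx l)
    set D := ∏ k ∈ univ.erase l, (k : ℕ)
    have hD : ∀ k : M.primeFactors, k ≠ l → (k : ℕ) ∣ D := fun k hk =>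
      dvd_prod_of_mem (fun k : M.primeFactors => (k : ℕ)) (mem_erase.2 ⟨hk, mem_univ _⟩)
    have h2 : ch l ^ (x l * D) = 1 := by
      have h3 := congrArg (· ^ D) h1
      simp only [one_pow] at h3
      rw [← prod_pow, ← mul_prod_erase univ _ (mem_univ l), ← pow_mul] at h3
      rw [prod_eq_one, mul_one] at h3
      · exact h3
      · intro k hk
        rw [← pow_mul, ← orderOf_dvd_iff_pow_eq_one, hch]
        exact Dvd.dvd.mul_left (hD k (ne_of_mem_erase hk)) _
    rw [← orderOf_dvd_iff_pow_eq_one, hch] at h2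
    rcases ((hpr l).dvd_mul).1 h2 with h | h
    · simpa using Nat.eq_zero_of_dvd_of_lt h hxl
    · exfalso
      obtain ⟨k, hk, hd⟩ := (Prime.dvd_finset_prod_iff (hpr l).prime _).1 h
      exact ne_of_mem_erase hk (Subtype.ext ((Nat.prime_dvd_prime_iff_eq (hpr l) (hpr k)).1 hd).symm)
  · simp only [Complex.norm_real, Real.norm_eq_abs, abs_prod, Pi.zero_apply]
    rw [← prod_univ_sum (fun l : M.primeFactors => range l) (fun l i => |sco l i|)]
    rw [prod_congr rfl fun (l : M.primeFactors) _ => sco_abs l (hpr l).two_le, prod_congr rfl fun (l : M.primeFactors) _ => habs l,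
      prod_mul_distrib]
    simp
  · intro γ hγ
    have e : ∑ x ∈ Fintype.piFinset (fun l : M.primeFactors => range l),
        (((∏ l : M.primeFactors, sco l (x l) : ℝ) : ℂ)) * (∏ l, ch l ^ x l) γ =
        (1 : MulChar E ℂ) γ * ∏ l : M.primeFactors, ∑ i ∈ range l, (sco l i : ℂ) * (ch l γ) ^ i := by
      rw [prod_univ_sum, mul_sum]
      refine sum_congr rfl fun x _ => ?_
      rw [prod_mul_distrib, Complex.ofReal_prod, mul_left_comm]
      congr 1
      by_cases h0 : γ = 0
      · rw [h0, MulChar.map_zero, MulChar.map_zero, zero_mul]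
      · rw [MulChar.one_apply (isUnit_iff_ne_zero.2 h0), one_mul]
        obtain ⟨g, rfl⟩ := isUnit_iff_ne_zero.2 h0
        have : ∀ s : Finset M.primeFactors, (∏ l ∈ s, ch l ^ x l) (g : E) = ∏ l ∈ s, (ch l (g : E)) ^ x l := by
          intro s
          induction s using Finset.induction_on with
          | empty => simp
          | insert a s ha ih =>
            rw [prod_insert ha, prod_insert ha, MulChar.mul_apply, ih, MulChar.pow_apply_coe]
        exact this univ
    rw [e] at hγ
    have h0 : γ ≠ 0 := by
      rintro rfl
      simp [MulChar.map_zero] at hγ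
    have hprod := right_ne_zero_of_mul hγ
    have hne : ∀ l : M.primeFactors, ch l γ ≠ 1 := by
      intro l h1
      refine prod_ne_zero_iff.1 hprod l (mem_univ _) ?_
      rw [h1]
      simp only [one_pow, mul_one]
      rw [← Complex.ofReal_sum]
      obtain ⟨k, hk⟩ : ∃ k, (l : ℕ) = k + 1 := ⟨l - 1, by have := (hpr l).pos; omega⟩
      rw [hk, sum_range_succ']
      simp only [sco, Nat.succ_ne_zero, if_false, if_true, sum_const, card_range, nsmul_eq_mul]
      have : (k : ℂ) + 1 ≠ 0 := by exact_mod_cast Nat.succ_ne_zero k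
      push_cast
      field_simp
      ring
    refine orderOf_eq_of_pow_and_pow_div_prime hM0 (FiniteField.pow_card_sub_one_eq_one γ h0) ?_
    intro p hp hpd h1
    refine hne ⟨p, Nat.mem_primeFactors.2 ⟨hp, hpd, hM0.ne'⟩⟩ ?_
    set l : M.primeFactors := ⟨p, Nat.mem_primeFactors.2 ⟨hp, hpd, hM0.ne'⟩⟩
    obtain ⟨u, rfl⟩ := isUnit_iff_ne_zero.2 h0
    obtain ⟨g, hg⟩ := IsCyclic.exists_generator (α := Eˣ)
    obtain ⟨k, rfl⟩ := (mem_powers_iff_mem_zpowers.2 (hg u))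
    have hog : orderOf g = M := by
      rw [orderOf_eq_card_of_forall_mem_zpowers hg, Nat.card_eq_fintype_card, Fintype.card_units]
    have h2 : g ^ (k * (M / p)) = 1 := by
      rw [pow_mul]
      exact Units.ext (by simpa using h1)
    rw [← orderOf_dvd_iff_pow_eq_one, hog] at h2
    have hpk : p ∣ k := by
      obtain ⟨d, hd⟩ := hpd
      rw [hd, Nat.mul_div_cancel_left _ hp.pos] at h2
      have hd0 : 0 < d := Nat.pos_of_ne_zero (by rintro rfl; omega)
      exact Nat.dvd_of_mul_dvd_mul_right hd0 h2
    have h3 : ch l ^ k = 1 := by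
      rw [← orderOf_dvd_iff_pow_eq_one, hch]
      exact hpk
    have h4 := congrArg (fun c : MulChar E ℂ => c (g : E)) h3
    simp only [MulChar.pow_apply_coe, MulChar.one_apply_coe] at h4
    show ch l ((g ^ k : Eˣ) : E) = 1
    rw [Units.val_pow_eq_pow_val, map_pow]
    exact h4

end Final


section Assembly
open Finset

lemma triv_count (E : Type*) [Field E] [Fintype E] (χ : MulChar E ℂ) (hχ : χ = 1) :
    (Fintype.card E : ℝ) - 3 ≤ ‖∑ x : E, χ (x + x⁻¹)‖ := by
  classical
  subst hχ
  have h1 : ∑ x : E, (1 : MulChar E ℂ) (x + x⁻¹) =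
      (((univ : Finset E).filter fun x => x + x⁻¹ ≠ 0).card : ℂ) := by
    rw [card_filter, Nat.cast_sum]
    refine sum_congr rfl fun x _ => ?_
    split_ifs with h
    · rw [MulChar.one_apply (isUnit_iff_ne_zero.2 h), Nat.cast_one]
    · rw [not_not.1 h, MulChar.map_zero, Nat.cast_zero]
  rw [h1, Complex.norm_natCast]
  have h2 : ((univ : Finset E).filter fun x => x + x⁻¹ = 0).card ≤ 3 := by
    have hP : (Polynomial.X ^ 3 + Polynomial.X : Polynomial E).natDegree = 3 := by compute_degree!
    have hP0 : (Polynomial.X ^ 3 + Polynomial.X : Polynomial E) ≠ 0 := by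
      intro h
      rw [h] at hP
      simp at hP
    have h3 : ((univ : Finset E).filter fun x => x + x⁻¹ = 0) ⊆
        (Polynomial.X ^ 3 + Polynomial.X : Polynomial E).roots.toFinset := by
      intro x hx
      have hx := (mem_filter.1 hx).2
      rw [Multiset.mem_toFinset, Polynomial.mem_roots hP0, Polynomial.IsRoot]
      simp only [Polynomial.eval_add, Polynomial.eval_pow, Polynomial.eval_X]
      by_cases h0 : x = 0
      · simp [h0]
      · field_simp at hx
        linear_combination x * hx
    calc _ ≤ _ := card_le_card h3
      _ ≤ _ := Multiset.toFinset_card_le _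
      _ ≤ _ := Polynomial.card_roots' _
      _ = 3 := hP
  have h3 := card_filter_add_card_filter_not (s := (univ : Finset E)) (fun x => x + x⁻¹ = 0)
  rw [card_univ] at h3
  have h4 : (Fintype.card E) ≤ ((univ : Finset E).filter fun x => x + x⁻¹ ≠ 0).card + 3 := by
    simp only [ne_eq]
    omega
  have : (Fintype.card E : ℝ) ≤ ((univ : Finset E).filter fun x => x + x⁻¹ ≠ 0).card + 3 := by
    exact_mod_cast h4
  linarith

lemma exists_prim (F E : Type*) [Field F] [Fintype F] [Field E] [Fintype E] [Algebra F E]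
    (hW : 4 * (2 ^ (Fintype.card E - 1).primeFactors.card : ℝ) * (Fintype.card F : ℝ) ^ 2 ≤
      Real.sqrt (Fintype.card E)) (a b : F) :
    ∃ ξ : E, ξ ≠ 0 ∧ Algebra.trace F E ξ = a ∧ Algebra.trace F E ξ⁻¹ = b ∧
      orderOf (ξ + ξ⁻¹) = Fintype.card E - 1 := by
  classical
  obtain ⟨J, hJ, S, j0, c, χ, hj0, hc0, hχ0, hχ, hsum, hord⟩ := sieve E
  by_contra! hcon
  have hq : (Fintype.card F : ℂ) ≠ 0 := by exact_mod_cast Fintype.card_ne_zero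
  have hchar : ringChar ℂ ≠ ringChar F := by
    have : ringChar F ≠ 0 := CharP.char_ne_zero_of_finite F (ringChar F)
    rw [ringChar.eq_zero]
    exact this.symm
  obtain ⟨ψ0, hψ0⟩ : ∃ ψ0 : AddChar F ℂ, ψ0 ≠ 1 := by
    refine ⟨AddChar.FiniteField.primitiveChar_to_Complex F, fun h => ?_⟩
    have := AddChar.FiniteField.primitiveChar_to_Complex_isPrimitive F
    rw [h] at this
    exact this one_ne_zero (by ext; simp)
  have hprim : ψ0.IsPrimitive := AddChar.IsPrimitive.of_ne_one hψ0
  let ψ : AddChar E ℂ := ψ0.compAddMonoidHom (Algebra.trace F E).toAddMonoidHom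
  have hψa : ∀ x, ψ x = ψ0 (Algebra.trace F E x) := fun x => rfl
  have hψ : ψ ≠ 1 := by
    obtain ⟨t, ht⟩ := (AddChar.ne_one_iff).1 hψ0
    obtain ⟨s, rfl⟩ := Algebra.trace_surjective F E t
    exact (AddChar.ne_one_iff).2 ⟨s, ht⟩
  set T : J × F × F → ℂ := fun j => ∑ x : E, χ j.1 (x + x⁻¹) *
    ψ (algebraMap F E j.2.1 * x + algebraMap F E j.2.2 * x⁻¹) with hT
  set cc : J × F × F → ℂ := fun j => c j.1 * ψ0 (-(j.2.1 * a) - j.2.2 * b) with hcc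
  have hzero : ∑ j ∈ S ×ˢ (univ : Finset (F × F)), cc j * T j = 0 := by
    have e : ∑ j ∈ S ×ˢ (univ : Finset (F × F)), cc j * T j =
        ∑ x : E, (∑ j ∈ S, c j * χ j (x + x⁻¹)) *
          ((∑ u : F, ψ0 (u * (Algebra.trace F E x - a))) *
            (∑ v : F, ψ0 (v * (Algebra.trace F E x⁻¹ - b)))) := by
      simp only [hT]
      simp_rw [mul_sum (s := (univ : Finset E))]
      rw [sum_comm]
      refine sum_congr rfl fun x _ => ?_
      rw [sum_product, sum_mul_sum, ← univ_product_univ]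
      rw [sum_mul]
      refine sum_congr rfl fun j _ => ?_
      rw [sum_product, mul_sum]
      refine sum_congr rfl fun u _ => ?_
      rw [mul_sum]
      refine sum_congr rfl fun v _ => ?_
      rw [← AddChar.map_add_eq_mul]
      simp only [hcc, hψa]
      rw [mul_mul_mul_comm, ← AddChar.map_add_eq_mul]
      congr 2
      rw [← Algebra.smul_def, ← Algebra.smul_def, map_add, map_smul, map_smul, smul_eq_mul,
        smul_eq_mul]
      ring
    rw [e]
    refine sum_eq_zero fun x _ => ?_
    rw [AddChar.sum_mulShift _ hprim, AddChar.sum_mulShift _ hprim]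
    by_cases h1 : Algebra.trace F E x = a
    swap
    · rw [if_neg (sub_ne_zero.2 h1)]; simp
    by_cases h2 : Algebra.trace F E x⁻¹ = b
    swap
    · rw [if_neg (sub_ne_zero.2 h2)]; simp
    rw [mul_eq_zero]
    left
    by_contra h3
    have h0 : x ≠ 0 := by
      rintro rfl
      apply h3
      simp [MulChar.map_zero]
    exact hcon x h0 h1 h2 (hord _ h3)
  have hψn : ∀ t : F, ‖ψ0 t‖ = 1 := fun t => AddChar.norm_apply _ _
  have hccn : ∀ j, ‖cc j‖ = ‖c j.1‖ := by
    intro j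
    rw [hcc, norm_mul, hψn, mul_one]
  have hmain := main_est (S ×ˢ (univ : Finset (F × F))) (j0, 0, 0) (by simp [hj0]) cc T
    (4 * Real.sqrt (Fintype.card E)) hzero (by
      rintro ⟨j, u, v⟩ hj hne
      refine SS_weil (χ j) ψ hψ _ _ ?_
      have hjS := (mem_product.1 hj).1
      by_cases h1 : j = j0
      · right
        by_contra! h2
        apply hne
        rw [h1]
        simpa using h2
      · left
        exact hχ j hjS h1)
  simp only [hccn] at hmain
  have hs : ∑ j ∈ S ×ˢ (univ : Finset (F × F)), ‖c j.1‖ =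
      2 ^ (Fintype.card E - 1).primeFactors.card * ‖c j0‖ * (Fintype.card F : ℝ) ^ 2 := by
    rw [sum_product, ← hsum, sum_mul]
    refine sum_congr rfl fun j _ => ?_
    simp only
    rw [sum_const, card_univ, Fintype.card_prod, nsmul_eq_mul]
    push_cast
    ring
  rw [hs] at hmain
  have hT0 : (Fintype.card E : ℝ) - 3 ≤ ‖T (j0, 0, 0)‖ := by
    have := triv_count E (χ j0) hχ0
    simpa [hT] using this
  have hcpos : 0 < ‖c j0‖ := norm_pos_iff.2 hc0
  set W : ℝ := 2 ^ (Fintype.card E - 1).primeFactors.card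
  set q : ℝ := (Fintype.card F : ℝ)
  set N : ℝ := (Fintype.card E : ℝ)
  have hN1 : (1 : ℝ) ≤ Real.sqrt N := by
    rw [Real.one_le_sqrt]
    exact Nat.one_le_cast.2 (Fintype.one_lt_card (α := E)).le
  have hNs : Real.sqrt N * Real.sqrt N = N := Real.mul_self_sqrt (Nat.cast_nonneg _)
  have h5 : ‖c j0‖ * (N - 3) ≤ ‖c j0‖ * ((W * q ^ 2 - 1) * (4 * Real.sqrt N)) := by
    refine (mul_le_mul_of_nonneg_left hT0 hcpos.le).trans (hmain.trans (le_of_eq ?_))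
    ring
  have h6 := le_of_mul_le_mul_left h5 hcpos
  nlinarith [mul_le_mul_of_nonneg_right hW (by linarith : (0 : ℝ) ≤ Real.sqrt N)]

end Assembly

/-- For every prime power `q` and every `n ≥ 25`, and all `a, b ∈ F_q`, there is a
nonzero `ξ ∈ F_{q^n}` with `Tr ξ = a`, `Tr ξ⁻¹ = b` and `ξ + ξ⁻¹` primitive. -/
theorem stmt9 (q n : ℕ) (hq : IsPrimePow q) (hn : 25 ≤ n)
    (F E : Type*) [Field F] [Fintype F] [Field E] [Fintype E] [Algebra F E]
    (hF : Fintype.card F = q) (hE : Fintype.card E = q ^ n) (a b : F) :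
    ∃ ξ : E, ξ ≠ 0 ∧ Algebra.trace F E ξ = a ∧ Algebra.trace F E ξ⁻¹ = b ∧
      orderOf (ξ + ξ⁻¹) = q ^ n - 1 := by
  have h := W_bound q n hq.two_le hn
  rw [← hE]
  refine exists_prim F E ?_ a b
  rw [hE, hF]
  exact h
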